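/- arXiv:2505.11469 — 5 statements merged into one kernel-verified Lean document; each statement's English description precedes it below -/
import Mathlib

section
/- For every integer ℓ ≥ 2 and every real x > 0, as n → ∞, ln H_{ℓ,n}(x) ~ (ℓ/(ℓ−1)) · (x·K_ℓ)^{1/ℓ} · n^{(ℓ−1)/ℓ}, i.e. the ratio of the two sides tends to 1. -/
open Filter Topology Real MeasureTheory Asymptotics

noncomputable section

/-- Number of joint orbits of the subgroup generated by a tuple of permutations. -/
def kappa {ℓ n : ℕ} (σ : Fin ℓ → Equiv.Perm (Fin n)) : ℕ :=
  Nat.card (MulAction.orbitRel.Quotient (Subgroup.closure (Set.range σ)) (Fin n))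

/-- `Acount ℓ n k` is the number of commuting `ℓ`-tuples of permutations of `{1,…,n}`
with exactly `k` joint orbits. -/
def Acount (ℓ n k : ℕ) : ℕ :=
  Nat.card {σ : Fin ℓ → Equiv.Perm (Fin n) //
    (∀ i j, σ i * σ j = σ j * σ i) ∧ kappa σ = k}

/-- `Hpoly ℓ n x = (1/n!) ∑_k A(ℓ,n,k) x^k`. -/
def Hpoly (ℓ n : ℕ) (x : ℝ) : ℝ :=
  (1 / (n.factorial : ℝ)) * ∑ k ∈ Finset.range (n + 1), (Acount ℓ n k : ℝ) * x ^ k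

/-- Expectation, under the Ewens-like measure `P_{ℓ,n,x}`, of `g(K_{ℓ,n})`. -/
def expectK (ℓ n : ℕ) (x : ℝ) (g : ℕ → ℝ) : ℝ :=
  (∑ k ∈ Finset.range (n + 1), g k * (Acount ℓ n k : ℝ) * x ^ k) /
    (∑ k ∈ Finset.range (n + 1), (Acount ℓ n k : ℝ) * x ^ k)

/-- Mean of `K_{ℓ,n}` under `P_{ℓ,n,x}`. -/
def meanK (ℓ n : ℕ) (x : ℝ) : ℝ := expectK ℓ n x (fun k => (k : ℝ))

/-- Variance of `K_{ℓ,n}` under `P_{ℓ,n,x}`. -/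
def varK (ℓ n : ℕ) (x : ℝ) : ℝ :=
  expectK ℓ n x (fun k => ((k : ℝ) - meanK ℓ n x) ^ 2)

/-- Real Riemann zeta values (as a series), `zetaR s = ∑_{m ≥ 1} m^{-s}`. -/
def zetaR (s : ℝ) : ℝ := ∑' m : ℕ, 1 / ((m : ℝ) + 1) ^ s

/-- The constant `K_ℓ = (ℓ-1)! ζ(2)⋯ζ(ℓ)`. -/
def Kconst (ℓ : ℕ) : ℝ := ((ℓ - 1).factorial : ℝ) * ∏ j ∈ Finset.Icc 2 ℓ, zetaR (j : ℝ)

/-- The multiple series `Z^{[ℓ]}_{α_1,…,α_ℓ}(t)` with complex exponents. -/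
def Zc (ℓ : ℕ) (α : Fin ℓ → ℂ) (t : ℝ) : ℂ :=
  ∑' δ : Fin ℓ → ℕ+,
    (∏ i, ((δ i : ℕ) : ℂ) ^ (α i - 1)) *
      Complex.exp (-(((∏ i, ((δ i : ℕ) : ℝ)) * t : ℝ) : ℂ))

/-- The multiple series `Z^{[ℓ]}_{α_1,…,α_ℓ}(t)` with real exponents. -/
def Zr (ℓ : ℕ) (α : Fin ℓ → ℝ) (t : ℝ) : ℝ :=
  ∑' δ : Fin ℓ → ℕ+,
    (∏ i, ((δ i : ℕ) : ℝ) ^ (α i - 1)) *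
      Real.exp (-(∏ i, ((δ i : ℕ) : ℝ)) * t)

/-- The staircase series `Z_m^{[ℓ]}(t) = Z^{[ℓ]}_{m,m-1,…,m-ℓ+1}(t)`. -/
def Zstair (ℓ : ℕ) (m : ℤ) (t : ℝ) : ℝ :=
  Zr ℓ (fun i => (m : ℝ) - (i : ℕ)) t

/-- The inverse function `(Z_ℓ^{[ℓ]})^{-1} : (0,∞) → (0,∞)`. -/
def ZstairInv (ℓ : ℕ) (u : ℝ) : ℝ :=
  Function.invFunOn (Zstair ℓ ℓ) (Set.Ioi 0) u

/-- The function `q_{ℓ,n}(y,u,θ)` from the saddle point analysis. -/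
def qfun (ℓ n : ℕ) (y u θ : ℝ) : ℂ :=
  Complex.I * (n : ℂ) * (θ : ℂ) - (y : ℂ) * ∑' δ : Fin ℓ → ℕ+,
    (∏ i, ((δ i : ℕ) : ℂ) ^ ((ℓ : ℤ) - 2 - (i : ℕ))) *
      Complex.exp (-(((∏ i, ((δ i : ℕ) : ℝ)) * u : ℝ) : ℂ)) *
      (Complex.exp (Complex.I * (((∏ i, ((δ i : ℕ) : ℝ)) * θ : ℝ) : ℂ)) - 1)

/-- The normalizing sequence `b_n = ((x K_ℓ)^{1/(2ℓ)}/√(ℓ(ℓ-1))) n^{(ℓ-1)/(2ℓ)}`. -/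
def bseq (ℓ : ℕ) (x : ℝ) (n : ℕ) : ℝ :=
  (x * Kconst ℓ) ^ ((1 : ℝ) / (2 * (ℓ : ℝ))) / Real.sqrt ((ℓ : ℝ) * ((ℓ : ℝ) - 1)) *
    (n : ℝ) ^ (((ℓ : ℝ) - 1) / (2 * (ℓ : ℝ)))

/-- The sequence `x_n = x e^{s/b_n}`. -/
def xseq (ℓ : ℕ) (x s : ℝ) (n : ℕ) : ℝ := x * Real.exp (s / bseq ℓ x n)

/-- The saddle point sequence `t_n = (Z_ℓ^{[ℓ]})^{-1}(n/x)`. -/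
def tseq (ℓ : ℕ) (x : ℝ) (n : ℕ) : ℝ := ZstairInv ℓ ((n : ℝ) / x)

end

/-!
Commuting `ℓ`-tuples in `S_n` are homomorphisms `ℤ ^ ℓ → S_n`. Marking a point of `{1, …, n}` and
recording its stabilizer, a subgroup of `ℤ ^ ℓ` of some index `m`, splits off the orbit of that
point; this gives `n H_n = x ∑ c_m H_{n-m}` for `H_n = H_{ℓ,n}(x)`, where `c_m` is the number of
subgroups of `ℤ ^ ℓ` of index `m`. Since `c` is the Dirichlet convolution of
`m ^ 0, …, m ^ (ℓ - 1)`, we have `∑ c_m e ^ (-m t) ~ K_ℓ t ^ (-ℓ)` as `t → 0+`. A stretched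
exponential `exp (A n ^ (1 - 1/ℓ))` is locally geometric with ratio `e ^ t`,
`t = A (1 - 1/ℓ) n ^ (-1/ℓ)`, so it is eventually a supersolution or a subsolution of the recursion
according as `(A (1 - 1/ℓ)) ^ ℓ` is larger or smaller than `x K_ℓ`; comparison with `H_n` from both
sides identifies the growth of `log H_n`.
-/

open Finset.HasAntidiagonal (antidiagonal mem_antidiagonal)

noncomputable section

/-! ### Exponential sums near zero -/

/-- The exponential sum `∑ m, c m * exp (-m t)` attached to a sequence `c`. -/
def expSum (c : ℕ → ℝ) (t : ℝ) : ℝ := ∑' m, c m * exp (-(m * t))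

/-- The nonnegative sequence `c`, with `c 0 = 0`, satisfies `expSum c t ~ K * t ^ (-p)`
as `t → 0⁺`. -/
structure HasExpSumAsymptotics (c : ℕ → ℝ) (p K : ℝ) : Prop where
  map_zero : c 0 = 0
  nonneg : ∀ m, 0 ≤ c m
  summable : ∀ t > 0, Summable fun m : ℕ => c m * exp (-(m * t))
  tendsto : Tendsto (fun t => t ^ p * expSum c t) (𝓝[>] 0) (𝓝 K)

lemma expSum_nonneg {c : ℕ → ℝ} (hc : ∀ m, 0 ≤ c m) (t : ℝ) : 0 ≤ expSum c t :=
  tsum_nonneg fun m => mul_nonneg (hc m) (exp_pos _).le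

lemma rpow_mul_expSum_mul (c : ℕ → ℝ) (p : ℝ) {a t : ℝ} (ha : 0 < a) (ht : 0 < t) :
    t ^ p * expSum c (a * t) = a ^ (-p) * ((a * t) ^ p * expSum c (a * t)) := by
  rw [mul_rpow ha.le ht.le, ← mul_assoc, ← mul_assoc, ← rpow_add ha, neg_add_cancel, rpow_zero,
    one_mul]

lemma rpow_mul_exp_neg_le {p t : ℝ} (hp : 0 < p) (ht : 0 < t) :
    t ^ p * exp (-t) ≤ exp (p * log p - p) := by
  have hlog : log t - log p ≤ t / p - 1 :=
    log_div ht.ne' hp.ne' ▸ log_le_sub_one_of_pos (div_pos ht hp)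
  rw [rpow_def_of_pos ht, ← exp_add, exp_le_exp]
  have := mul_le_mul_of_nonneg_left hlog hp.le
  rw [mul_sub, mul_sub, mul_div_cancel₀ _ hp.ne'] at this
  linarith

namespace HasExpSumAsymptotics

variable {c : ℕ → ℝ} {p K : ℝ}

lemma const_mul {x : ℝ} (hx : 0 ≤ x) (hc : HasExpSumAsymptotics c p K) :
    HasExpSumAsymptotics (fun m => x * c m) p (x * K) where
  map_zero := by simp only [hc.map_zero, mul_zero]
  nonneg m := mul_nonneg hx (hc.nonneg m)
  summable t ht := by simpa only [mul_assoc] using (hc.summable t ht).mul_left x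
  tendsto := by
    have hsum : expSum (fun m => x * c m) = fun t => x * expSum c t := by
      funext t
      simp only [expSum, mul_assoc, tsum_mul_left]
    simpa only [hsum, mul_left_comm] using hc.tendsto.const_mul x

lemma expSum_le_exp_mul (hc : HasExpSumAsymptotics c p K) {s t : ℝ} (hs : 0 < s) (hst : s ≤ t) :
    expSum c t ≤ exp (s - t) * expSum c s := by
  rw [expSum, expSum, ← tsum_mul_left]
  refine (hc.summable t (hs.trans_le hst)).tsum_le_tsum (fun m => ?_)
    ((hc.summable s hs).mul_left _)
  rcases Nat.eq_zero_or_pos m with rfl | hm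
  · simp [hc.map_zero]
  rw [mul_left_comm, ← exp_add]
  have hm' : (1 : ℝ) ≤ m := by exact_mod_cast hm
  refine mul_le_mul_of_nonneg_left (exp_le_exp.2 ?_) (hc.nonneg m)
  nlinarith

lemma exists_rpow_mul_expSum_le (hp : 0 < p) (hc : HasExpSumAsymptotics c p K) :
    ∃ C, ∀ t > 0, t ^ p * expSum c t ≤ C := by
  obtain ⟨s, hs : 0 < s, hnear⟩ :=
    mem_nhdsGT_iff_exists_Ioc_subset.1 (hc.tendsto.eventually_lt_const (lt_add_one K))
  refine ⟨max (K + 1) (exp (p * log p - p) * (exp s * expSum c s)), fun t ht => ?_⟩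
  rcases le_total t s with hts | hst
  · exact (hnear ⟨ht, hts⟩).le.trans (le_max_left _ _)
  calc t ^ p * expSum c t ≤ t ^ p * (exp (s - t) * expSum c s) := by
        gcongr; exact hc.expSum_le_exp_mul hs hst
    _ = t ^ p * exp (-t) * (exp s * expSum c s) := by rw [sub_eq_neg_add, exp_add]; ring
    _ ≤ exp (p * log p - p) * (exp s * expSum c s) := by
        have := expSum_nonneg hc.nonneg s
        gcongr; exact rpow_mul_exp_neg_le hp ht
    _ ≤ _ := le_max_right _ _

lemma tendsto_rpow_mul_expSum_mul (hc : HasExpSumAsymptotics c p K) {a : ℝ} (ha : 0 < a) :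
    Tendsto (fun t => t ^ p * expSum c (a * t)) (𝓝[>] 0) (𝓝 (a ^ (-p) * K)) := by
  have hscale : Tendsto (fun t => a * t) (𝓝[>] 0) (𝓝[>] 0) :=
    tendsto_iff_comap.2 (comap_mulLeft_nhdsGT_zero ha).ge
  refine ((hc.tendsto.comp hscale).const_mul (a ^ (-p))).congr' ?_
  filter_upwards [self_mem_nhdsWithin] with t ht
  exact (rpow_mul_expSum_mul c p ha ht).symm

end HasExpSumAsymptotics

lemma hasSum_arithmeticFunction_mul {f g : ArithmeticFunction ℝ} {u : ℕ → ℝ} {s : ℝ}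
    (h : HasSum (fun q : ℕ × ℕ => f q.1 * g q.2 * u (q.1 * q.2)) s) :
    HasSum (fun m => (f * g) m * u m) s := by
  have hfiber (m : ℕ) : ∑' q : (fun q : ℕ × ℕ => q.1 * q.2) ⁻¹' {m},
      f q.1.1 * g q.1.2 * u (q.1.1 * q.1.2) = (f * g) m * u m := by
    rcases eq_or_ne m 0 with rfl | hm
    · have hzero (q : (fun q : ℕ × ℕ => q.1 * q.2) ⁻¹' {0}) : f q.1.1 * g q.1.2 = 0 := by
        obtain h0 | h0 := mul_eq_zero.1 (Set.mem_singleton_iff.1 q.2) <;> simp [h0]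
      simp [hzero]
    have hset : (fun q : ℕ × ℕ => q.1 * q.2) ⁻¹' {m} = m.divisorsAntidiagonal := by
      ext q
      simp [hm]
    rw [hset, Finset.tsum_subtype' m.divisorsAntidiagonal
      fun q : ℕ × ℕ => f q.1 * g q.2 * u (q.1 * q.2), ArithmeticFunction.mul_apply, Finset.sum_mul]
    exact Finset.sum_congr rfl fun q hq => by rw [(Nat.mem_divisorsAntidiagonal.1 hq).1]
  simpa only [hfiber] using h.tsum_fiberwise fun q => q.1 * q.2

lemma hasSum_mul_expSum {f g : ArithmeticFunction ℝ} {t : ℝ} (hf : ∀ m, 0 ≤ f m)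
    (hg : ∀ m, 0 ≤ g m) (hgt : ∀ e : ℕ, e ≠ 0 → Summable fun d : ℕ => g d * exp (-(d * (e * t))))
    (hfg : Summable fun e : ℕ => f e * expSum g (e * t)) :
    HasSum (fun m : ℕ => (f * g) m * exp (-(m * t))) (∑' e : ℕ, f e * expSum g (e * t)) := by
  refine hasSum_arithmeticFunction_mul (u := fun m => exp (-(m * t))) ?_
  have hterm (e d : ℕ) : f e * g d * exp (-((e * d : ℕ) * t))
      = f e * (g d * exp (-(d * (e * t)))) := by
    rw [mul_assoc]; push_cast; ring_nf
  have hrow (e : ℕ) : HasSum (fun d : ℕ => f e * g d * exp (-((e * d : ℕ) * t)))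
      (f e * expSum g (e * t)) := by
    simp only [hterm]
    rcases eq_or_ne e 0 with rfl | he
    · simp
    · exact (hgt e he).hasSum.mul_left _
  have hnonneg (q : ℕ × ℕ) : 0 ≤ f q.1 * g q.2 * exp (-((q.1 * q.2 : ℕ) * t)) :=
    mul_nonneg (mul_nonneg (hf _) (hg _)) (exp_pos _).le
  have hsum : Summable fun q : ℕ × ℕ => f q.1 * g q.2 * exp (-((q.1 * q.2 : ℕ) * t)) :=
    (summable_prod_of_nonneg hnonneg).2
      ⟨fun e => (hrow e).summable, hfg.congr fun e => (hrow e).tsum_eq.symm⟩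
  simpa only [hsum.tsum_prod, (hrow _).tsum_eq] using hsum.hasSum

namespace HasExpSumAsymptotics

variable {f g : ArithmeticFunction ℝ} {p K Z : ℝ}

lemma exists_rpow_mul_mul_expSum_le (hp : 0 < p) (hf : ∀ m, 0 ≤ f m)
    (hg : HasExpSumAsymptotics g p K) :
    ∃ C, ∀ t > 0, ∀ e : ℕ, t ^ p * (f e * expSum g (e * t)) ≤ f e * (e : ℝ) ^ (-p) * C := by
  obtain ⟨C, hC⟩ := hg.exists_rpow_mul_expSum_le hp
  refine ⟨C, fun t ht e => ?_⟩
  rcases eq_or_ne e 0 with rfl | he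
  · simp
  have he : (0 : ℝ) < e := Nat.cast_pos.2 he.bot_lt
  rw [mul_left_comm, rpow_mul_expSum_mul g p he ht, ← mul_assoc]
  exact mul_le_mul_of_nonneg_left (hC _ (mul_pos he ht)) (mul_nonneg (hf e) (rpow_nonneg he.le _))

/-- Since `expSum (f * g) t = ∑ e, f e * expSum g (e t)`, dominated convergence pulls the limit
of each `t ^ p * expSum g (e t)` through the sum over `e`. -/
lemma mul (hp : 0 < p) (hf : ∀ m, 0 ≤ f m) (hZ : HasSum (fun e : ℕ => f e * (e : ℝ) ^ (-p)) Z)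
    (hg : HasExpSumAsymptotics g p K) :
    HasExpSumAsymptotics (f * g : ArithmeticFunction ℝ) p (Z * K) := by
  obtain ⟨C, hC⟩ := hg.exists_rpow_mul_mul_expSum_le hp hf
  have hnonneg {t : ℝ} (ht : 0 < t) (e : ℕ) : 0 ≤ t ^ p * (f e * expSum g (e * t)) :=
    mul_nonneg (rpow_nonneg ht.le _) (mul_nonneg (hf e) (expSum_nonneg hg.nonneg _))
  have hsummable {t : ℝ} (ht : 0 < t) : Summable fun e : ℕ => f e * expSum g (e * t) :=
    (summable_mul_left_iff (rpow_pos_of_pos ht p).ne').1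
      ((hZ.summable.mul_right C).of_nonneg_of_le (hnonneg ht) (hC t ht))
  have hsum {t : ℝ} (ht : 0 < t) := hasSum_mul_expSum hf hg.nonneg
    (fun e he => hg.summable _ (mul_pos (Nat.cast_pos.2 he.bot_lt) ht)) (hsummable ht)
  have hlim (e : ℕ) : Tendsto (fun t => t ^ p * (f e * expSum g (e * t))) (𝓝[>] 0)
      (𝓝 (f e * (e : ℝ) ^ (-p) * K)) := by
    rcases eq_or_ne e 0 with rfl | he
    · simp
    simpa only [mul_assoc, mul_left_comm] using
      (hg.tendsto_rpow_mul_expSum_mul (Nat.cast_pos.2 he.bot_lt)).const_mul (f e)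
  refine ⟨(f * g).map_zero, fun m => ?_, fun t ht => (hsum ht).summable, ?_⟩
  · rw [ArithmeticFunction.mul_apply]
    exact Finset.sum_nonneg fun q _ => mul_nonneg (hf _) (hg.nonneg _)
  rw [← (hZ.mul_right K).tsum_eq]
  refine (tendsto_tsum_of_dominated_convergence (hZ.summable.mul_right C) hlim ?_).congr' ?_
  · filter_upwards [self_mem_nhdsWithin] with t ht e
    rw [Real.norm_of_nonneg (hnonneg ht e)]
    exact hC t ht e
  · filter_upwards [self_mem_nhdsWithin] with t ht
    rw [tsum_mul_left, expSum, (hsum ht).tsum_eq]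

end HasExpSumAsymptotics

open ArithmeticFunction in
lemma pow_le_factorial_mul_choose (r n : ℕ) : pow r n ≤ r.factorial * (n + r).choose r := by
  have hle : pow r n ≤ (n + 1) ^ r := by
    rw [pow_apply]
    split_ifs
    · exact Nat.zero_le _
    · exact Nat.pow_le_pow_left n.le_succ r
  exact hle.trans (Nat.ascFactorial_eq_factorial_mul_choose n r ▸ Nat.pow_succ_le_ascFactorial _ r)

open ArithmeticFunction in
lemma factorial_mul_choose_le_pow (r n : ℕ) :
    r.factorial * (n + r).choose r ≤ pow r (n + (r + 1)) := by
  rw [← Nat.descFactorial_eq_factorial_mul_choose, pow_apply, if_neg (by lia)]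
  exact (Nat.descFactorial_le_pow _ r).trans (Nat.pow_le_pow_left (by lia) r)

section PowerSeries

variable (r : ℕ) {q : ℝ}

lemma hasSum_factorial_mul_choose_mul_geometric (hq0 : 0 ≤ q) (hq1 : q < 1) :
    HasSum (fun n : ℕ => ((r.factorial * (n + r).choose r : ℕ) : ℝ) * q ^ n)
      (r.factorial / (1 - q) ^ (r + 1)) := by
  have hq : ‖q‖ < 1 := by rwa [Real.norm_of_nonneg hq0]
  simpa [mul_assoc, div_eq_mul_inv] using
    (hasSum_choose_mul_geometric_of_norm_lt_one r hq).mul_left (r.factorial : ℝ)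

lemma pow_mul_geometric_le (hq0 : 0 ≤ q) (n : ℕ) :
    (ArithmeticFunction.pow r n : ℝ) * q ^ n
      ≤ ((r.factorial * (n + r).choose r : ℕ) : ℝ) * q ^ n := by
  gcongr
  exact pow_le_factorial_mul_choose r n

lemma summable_pow_mul_geometric (hq0 : 0 ≤ q) (hq1 : q < 1) :
    Summable fun n : ℕ => (ArithmeticFunction.pow r n : ℝ) * q ^ n :=
  (hasSum_factorial_mul_choose_mul_geometric r hq0 hq1).summable.of_nonneg_of_le
    (fun _ => by positivity) (pow_mul_geometric_le r hq0)

lemma tsum_pow_mul_geometric_le (hq0 : 0 ≤ q) (hq1 : q < 1) :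
    ∑' n : ℕ, (ArithmeticFunction.pow r n : ℝ) * q ^ n ≤ r.factorial / (1 - q) ^ (r + 1) :=
  hasSum_le (pow_mul_geometric_le r hq0) (summable_pow_mul_geometric r hq0 hq1).hasSum
    (hasSum_factorial_mul_choose_mul_geometric r hq0 hq1)

lemma le_tsum_pow_mul_geometric (hq0 : 0 ≤ q) (hq1 : q < 1) :
    q ^ (r + 1) * (r.factorial / (1 - q) ^ (r + 1))
      ≤ ∑' n : ℕ, (ArithmeticFunction.pow r n : ℝ) * q ^ n := by
  have hsum := summable_pow_mul_geometric r hq0 hq1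
  have hchoose := (hasSum_factorial_mul_choose_mul_geometric r hq0 hq1).mul_left (q ^ (r + 1))
  rw [← hsum.sum_add_tsum_nat_add (r + 1)]
  refine le_add_of_nonneg_of_le (Finset.sum_nonneg fun _ _ => by positivity) ?_
  refine hasSum_le (fun n => ?_) hchoose ((summable_nat_add_iff (r + 1)).2 hsum).hasSum
  rw [mul_left_comm, ← pow_add, add_comm (r + 1)]
  gcongr
  exact factorial_mul_choose_le_pow r n

end PowerSeries

lemma tendsto_div_one_sub_exp_neg :
    Tendsto (fun t : ℝ => t / (1 - exp (-t))) (𝓝[>] 0) (𝓝 1) := by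
  have hderiv : HasDerivAt (fun t : ℝ => 1 - exp (-t)) 1 0 := by
    simpa using ((hasDerivAt_neg (0 : ℝ)).exp).const_sub 1
  have hslope := (hasDerivAt_iff_tendsto_slope.1 hderiv).mono_left
    (nhdsWithin_mono (0 : ℝ) fun y (hy : 0 < y) => hy.ne')
  refine (inv_one (G := ℝ) ▸ hslope.inv₀ one_ne_zero).congr fun t => ?_
  simp [slope_def_field]

lemma hasExpSumAsymptotics_pow (r : ℕ) :
    HasExpSumAsymptotics (ArithmeticFunction.pow r : ArithmeticFunction ℝ) (r + 1 : ℕ)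
      r.factorial := by
  have hgeom (t : ℝ) (m : ℕ) : exp (-(m * t)) = exp (-t) ^ m := by
    rw [← exp_nat_mul, mul_neg]
  have hq {t : ℝ} (ht : 0 < t) : exp (-t) < 1 := Real.exp_lt_one_iff.2 (neg_neg_iff_pos.2 ht)
  refine ⟨ArithmeticFunction.map_zero, fun m => ?_, fun t ht => ?_, ?_⟩
  · simp only [ArithmeticFunction.natCoe_apply, Nat.cast_nonneg]
  · simpa only [hgeom, ArithmeticFunction.natCoe_apply] using
      summable_pow_mul_geometric r (exp_pos _).le (hq ht)
  have hexp : Tendsto (fun t : ℝ => exp (-t)) (𝓝[>] 0) (𝓝 1) := by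
    have : Continuous fun t : ℝ => exp (-t) := by fun_prop
    simpa using (this.tendsto 0).mono_left nhdsWithin_le_nhds
  have hupper := (tendsto_div_one_sub_exp_neg.pow (r + 1)).mul_const (r.factorial : ℝ)
  have hlower := (hexp.pow (r + 1)).mul hupper
  simp only [one_pow, one_mul] at hlower hupper
  simp only [rpow_natCast, expSum, hgeom, ArithmeticFunction.natCoe_apply]
  refine tendsto_of_tendsto_of_tendsto_of_le_of_le' hlower hupper ?_ ?_
  all_goals filter_upwards [self_mem_nhdsWithin] with t (ht : 0 < t)
  · calc _ = t ^ (r + 1) * (exp (-t) ^ (r + 1) * (r.factorial / (1 - exp (-t)) ^ (r + 1))) := by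
          rw [div_pow]; ring
      _ ≤ _ := by gcongr; exact le_tsum_pow_mul_geometric r (exp_pos _).le (hq ht)
  · calc _ ≤ t ^ (r + 1) * (r.factorial / (1 - exp (-t)) ^ (r + 1)) := by
          gcongr; exact tsum_pow_mul_geometric_le r (exp_pos _).le (hq ht)
      _ = _ := by rw [div_pow]; ring

lemma summable_zetaR {s : ℝ} (hs : 1 < s) : Summable fun m : ℕ => 1 / ((m : ℝ) + 1) ^ s := by
  simpa using (summable_nat_add_iff 1).2 (Real.summable_one_div_nat_rpow.2 hs)

lemma zetaR_pos {s : ℝ} (hs : 1 < s) : 0 < zetaR s :=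
  (summable_zetaR hs).tsum_pos (fun m => by positivity) 0 (by simp)

lemma hasSum_pow_mul_rpow_neg {r : ℕ} {p : ℝ} (hp : r + 1 < p) :
    HasSum (fun e : ℕ => (ArithmeticFunction.pow r : ArithmeticFunction ℝ) e * (e : ℝ) ^ (-p))
      (zetaR (p - r)) := by
  rw [← hasSum_nat_add_iff' 1]
  simp only [Finset.sum_range_one, ArithmeticFunction.map_zero, zero_mul, sub_zero]
  refine (summable_zetaR (lt_sub_iff_add_lt'.2 hp)).hasSum.congr_fun fun m => ?_
  have hm : (0 : ℝ) < m + 1 := by positivity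
  simp only [ArithmeticFunction.natCoe_apply, ArithmeticFunction.pow_apply]
  rw [if_neg (by lia), one_div, ← rpow_neg hm.le, neg_sub, sub_eq_add_neg, rpow_add hm]
  push_cast
  rw [rpow_natCast]

lemma Kconst_pos (l : ℕ) : 0 < Kconst l :=
  mul_pos (Nat.cast_pos.2 (Nat.factorial_pos _)) <| Finset.prod_pos fun _ hj =>
    zetaR_pos (Nat.one_lt_cast.2 (Finset.mem_Icc.1 hj).1)

lemma hasExpSumAsymptotics_prod_pow_mul_pow {r k : ℕ} (hk : k ≤ r) :
    HasExpSumAsymptotics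
      (((∏ i ∈ Finset.range k, ArithmeticFunction.pow i) * ArithmeticFunction.pow r :
        ArithmeticFunction ℕ) : ArithmeticFunction ℝ) (r + 1 : ℕ)
      ((∏ i ∈ Finset.range k, zetaR ((r + 1 : ℕ) - i)) * r.factorial) := by
  induction k with
  | zero => simpa using hasExpSumAsymptotics_pow r
  | succ k ih =>
    rw [Finset.prod_range_succ_comm, Finset.prod_range_succ_comm, mul_assoc, mul_assoc,
      ArithmeticFunction.natCoe_mul]
    refine (ih (by lia)).mul (by positivity) (fun m => ?_) (hasSum_pow_mul_rpow_neg ?_)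
    · simp only [ArithmeticFunction.natCoe_apply, Nat.cast_nonneg]
    · exact_mod_cast Nat.succ_lt_succ hk

lemma hasExpSumAsymptotics_prod_pow {l : ℕ} (hl : l ≠ 0) :
    HasExpSumAsymptotics
      (fun m => (∏ i ∈ Finset.range l, ArithmeticFunction.pow i : ArithmeticFunction ℕ) m)
      l (Kconst l) := by
  obtain ⟨r, rfl⟩ := Nat.exists_eq_succ_of_ne_zero hl
  have hK : (∏ i ∈ Finset.range r, zetaR ((r + 1 : ℕ) - i)) * r.factorial = Kconst (r + 1) := by
    rw [Kconst, mul_comm, Nat.add_sub_cancel, ← Finset.Ico_add_one_right_eq_Icc,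
      Finset.prod_Ico_eq_prod_range, ← Finset.prod_range_reflect]
    congr 1
    refine Finset.prod_congr (by lia) fun i hi => ?_
    have hi : i < r := by simpa using hi
    rw [← Nat.cast_sub (by lia)]
    congr 2
    lia
  rw [← hK]
  have h := hasExpSumAsymptotics_prod_pow_mul_pow (le_refl r)
  rwa [← Finset.prod_range_succ] at h

/-! ### Comparison with stretched exponentials -/

lemma exists_le_mul_of_subsolution_of_supersolution {c f g : ℕ → ℝ} (hc : ∀ m, 0 ≤ c m)
    (hc0 : c 0 = 0) (hg : ∀ n, 0 < g n)
    (hsub : ∀ᶠ n : ℕ in atTop, n * f n ≤ ∑ q ∈ antidiagonal n, c q.1 * f q.2)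
    (hsuper : ∀ᶠ n : ℕ in atTop, ∑ q ∈ antidiagonal n, c q.1 * g q.2 ≤ n * g n) :
    ∃ C > 0, ∀ n, f n ≤ C * g n := by
  obtain ⟨N, hN⟩ := eventually_atTop.1 ((hsub.and hsuper).and (eventually_gt_atTop 0))
  have hratio (n : ℕ) : 0 ≤ |f n| / g n := div_nonneg (abs_nonneg _) (hg n).le
  refine ⟨1 + ∑ i ∈ Finset.range N, |f i| / g i,
    add_pos_of_pos_of_nonneg one_pos (Finset.sum_nonneg fun i _ => hratio i), fun n => ?_⟩
  set C := 1 + ∑ i ∈ Finset.range N, |f i| / g i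
  induction n using Nat.strong_induction_on with | _ n ih
  rcases lt_or_ge n N with hn | hn
  · rw [← div_le_iff₀ (hg n)]
    calc f n / g n ≤ |f n| / g n := div_le_div_of_nonneg_right (le_abs_self _) (hg n).le
      _ ≤ ∑ i ∈ Finset.range N, |f i| / g i :=
          Finset.single_le_sum (f := fun i => |f i| / g i) (fun i _ => hratio i)
            (Finset.mem_range.2 hn)
      _ ≤ C := le_add_of_nonneg_left zero_le_one
  obtain ⟨⟨hfn, hgn⟩, hn0⟩ := hN n hn
  have hC : 0 ≤ C := add_nonneg zero_le_one (Finset.sum_nonneg fun i _ => hratio i)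
  refine le_of_mul_le_mul_left ?_ (Nat.cast_pos.2 hn0 : (0 : ℝ) < n)
  calc n * f n ≤ ∑ q ∈ antidiagonal n, c q.1 * f q.2 := hfn
    _ ≤ ∑ q ∈ antidiagonal n, C * (c q.1 * g q.2) := Finset.sum_le_sum fun q hq => ?_
    _ = C * ∑ q ∈ antidiagonal n, c q.1 * g q.2 := (Finset.mul_sum ..).symm
    _ ≤ C * (n * g n) := mul_le_mul_of_nonneg_left hgn hC
    _ = n * (C * g n) := mul_left_comm ..
  rcases eq_or_ne q.1 0 with hq0 | hq0
  · simp [hq0, hc0]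
  · rw [mul_left_comm]
    have hlt : q.2 < n := by
      have := mem_antidiagonal.1 hq
      lia
    exact mul_le_mul_of_nonneg_left (ih _ hlt) (hc _)

lemma rpow_add_le_rpow_add_mul {a k s : ℝ} (ha0 : 0 ≤ a) (ha1 : a ≤ 1) (hk : 0 < k)
    (hs : 0 ≤ k + s) : (k + s) ^ a ≤ k ^ a + a * k ^ (a - 1) * s := by
  have hsk : -1 ≤ s / k := by rw [le_div_iff₀ hk]; linarith
  have hfactor : k + s = k * (1 + s / k) := by field_simp
  rw [hfactor, mul_rpow hk.le (by linarith), rpow_sub_one hk.ne']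
  calc k ^ a * (1 + s / k) ^ a ≤ k ^ a * (1 + a * (s / k)) := by
        gcongr; exact rpow_one_add_le_one_add_mul_self hsk ha0 ha1
    _ = _ := by field_simp

lemma exists_one_lt_mul_rpow_neg_mul {B p K : ℝ} (hB : 0 < B) (hp : 0 < p) (hBK : B ^ p < K) :
    ∃ u, 0 < u ∧ u < 1 ∧ 1 < (B * u ^ (-p⁻¹)) ^ (-p) * K := by
  have hK : 0 < K := (rpow_pos_of_pos hB p).trans hBK
  obtain ⟨u, hKu, hu1⟩ := exists_between ((div_lt_one hK).2 hBK)
  have hu0 : 0 < u := lt_trans (by positivity) hKu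
  refine ⟨u, hu0, hu1, ?_⟩
  rw [mul_rpow hB.le (by positivity), ← rpow_mul hu0.le, neg_mul_neg, inv_mul_cancel₀ hp.ne',
    rpow_one, rpow_neg hB.le, mul_assoc, one_lt_inv_mul₀ (by positivity)]
  exact (div_lt_iff₀ hK).1 hKu

section StretchedExp

variable {A a : ℝ}

lemma exp_rpow_le_exp_rpow_add_mul (hA : 0 ≤ A) (ha0 : 0 ≤ a) (ha1 : a ≤ 1) {k m : ℝ}
    (hk : 0 ≤ k) (hkm : 0 < k + m) :
    exp (A * k ^ a) ≤ exp (A * (k + m) ^ a) * exp (-(m * (A * a * (k + m) ^ (a - 1)))) := by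
  have hconcave := rpow_add_le_rpow_add_mul ha0 ha1 hkm (s := -m) (by simpa using hk)
  rw [add_neg_cancel_right] at hconcave
  rw [← exp_add, exp_le_exp]
  linarith [mul_le_mul_of_nonneg_left hconcave hA]

lemma exp_rpow_add_mul_le_exp_rpow (hA : 0 ≤ A) (ha0 : 0 ≤ a) (ha1 : a ≤ 1) {u k m : ℝ}
    (hu : 0 < u) (hm : 0 ≤ m) (hkm : 0 < k + m) (huk : u * (k + m) ≤ k) :
    exp (A * (k + m) ^ a) * exp (-(m * (A * a * u ^ (a - 1) * (k + m) ^ (a - 1))))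
      ≤ exp (A * k ^ a) := by
  have hk : 0 < k := (mul_pos hu hkm).trans_le huk
  have hslope : k ^ (a - 1) ≤ u ^ (a - 1) * (k + m) ^ (a - 1) := by
    rw [← mul_rpow hu.le hkm.le]
    exact rpow_le_rpow_of_nonpos (mul_pos hu hkm) huk (by linarith)
  have hconcave : (k + m) ^ a ≤ k ^ a + a * (u ^ (a - 1) * (k + m) ^ (a - 1)) * m :=
    (rpow_add_le_rpow_add_mul ha0 ha1 hk hkm.le).trans (by gcongr)
  rw [← exp_add, exp_le_exp]
  linarith [mul_le_mul_of_nonneg_left hconcave hA]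

end StretchedExp

namespace HasExpSumAsymptotics

variable {c : ℕ → ℝ} {p K : ℝ}

lemma tendsto_expSum_rpow_div (hp : 0 < p) (hc : HasExpSumAsymptotics c p K) {b : ℝ} (hb : 0 < b) :
    Tendsto (fun n : ℕ => expSum c (b * (n : ℝ) ^ (-p⁻¹)) / n) atTop (𝓝 (b ^ (-p) * K)) := by
  have hscale : Tendsto (fun n : ℕ => (n : ℝ) ^ (-p⁻¹)) atTop (𝓝[>] 0) := by
    refine tendsto_nhdsWithin_iff.2
      ⟨(tendsto_rpow_neg_atTop (inv_pos.2 hp)).comp tendsto_natCast_atTop_atTop, ?_⟩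
    filter_upwards [eventually_gt_atTop 0] with n hn
    exact rpow_pos_of_pos (Nat.cast_pos.2 hn) _
  refine ((hc.tendsto_rpow_mul_expSum_mul hb).comp hscale).congr fun n => ?_
  rw [Function.comp_apply, ← rpow_mul n.cast_nonneg, neg_mul, inv_mul_cancel₀ hp.ne', rpow_neg_one,
    inv_mul_eq_div]

lemma expSum_le_sum_add (hc : HasExpSumAsymptotics c p K) (N : ℕ) {t : ℝ} (ht : 0 < t) :
    expSum c t ≤ ∑ m ∈ Finset.range N, c m * exp (-(m * t))
      + exp (-(N * (t / 2))) * expSum c (t / 2) := by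
  have hhalf := hc.summable (t / 2) (half_pos ht)
  rw [expSum, ← (hc.summable t ht).sum_add_tsum_nat_add N]
  gcongr
  calc ∑' m : ℕ, c (m + N) * exp (-((m + N : ℕ) * t))
      ≤ ∑' m : ℕ, exp (-(N * (t / 2))) * (c (m + N) * exp (-((m + N : ℕ) * (t / 2)))) := by
        refine ((summable_nat_add_iff N).2 (hc.summable t ht)).tsum_le_tsum (fun m => ?_)
          (((summable_nat_add_iff N).2 hhalf).mul_left _)
        rw [mul_left_comm, ← exp_add]
        refine mul_le_mul_of_nonneg_left (exp_le_exp.2 ?_) (hc.nonneg _)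
        push_cast
        nlinarith [mul_nonneg m.cast_nonneg ht.le]
    _ ≤ _ := by
        rw [tsum_mul_left, expSum, ← hhalf.sum_add_tsum_nat_add N]
        gcongr
        exact le_add_of_nonneg_left
          (Finset.sum_nonneg fun m _ => mul_nonneg (hc.nonneg m) (exp_pos _).le)

lemma eventually_sum_mul_exp_rpow_le (hp : 1 < p) (hc : HasExpSumAsymptotics c p K) {A : ℝ}
    (hA : 0 < A) (hAK : K < (A * (1 - p⁻¹)) ^ p) :
    ∀ᶠ n : ℕ in atTop, ∑ q ∈ antidiagonal n, c q.1 * exp (A * (q.2 : ℝ) ^ (1 - p⁻¹))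
      ≤ n * exp (A * (n : ℝ) ^ (1 - p⁻¹)) := by
  have ha : 0 < 1 - p⁻¹ := sub_pos.2 (inv_lt_one_of_one_lt₀ hp)
  have hp0 : 0 < p := one_pos.trans hp
  have hlt : (A * (1 - p⁻¹)) ^ (-p) * K < 1 := by
    rwa [rpow_neg (by positivity), inv_mul_lt_iff₀ (by positivity), mul_one]
  filter_upwards [(hc.tendsto_expSum_rpow_div hp0 (mul_pos hA ha)).eventually_lt_const hlt,
    eventually_gt_atTop 0] with n hn hn0
  have hn0 : (0 : ℝ) < n := Nat.cast_pos.2 hn0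
  set t := A * (1 - p⁻¹) * (n : ℝ) ^ (-p⁻¹) with ht
  have hterm : ∀ q ∈ antidiagonal n, c q.1 * exp (A * (q.2 : ℝ) ^ (1 - p⁻¹))
      ≤ exp (A * (n : ℝ) ^ (1 - p⁻¹)) * (c q.1 * exp (-(q.1 * t))) := fun q hq => by
    have hqn : (n : ℝ) = q.2 + q.1 := by
      rw [← mem_antidiagonal.1 hq, Nat.cast_add, add_comm]
    have := exp_rpow_le_exp_rpow_add_mul hA.le ha.le (sub_le_self _ (inv_pos.2 hp0).le)
      q.2.cast_nonneg (hqn ▸ hn0)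
    rw [← hqn, sub_sub_cancel_left, ← ht] at this
    rw [mul_left_comm]
    exact mul_le_mul_of_nonneg_left this (hc.nonneg _)
  calc _ ≤ ∑ q ∈ antidiagonal n,
        exp (A * (n : ℝ) ^ (1 - p⁻¹)) * (c q.1 * exp (-(q.1 * t))) := Finset.sum_le_sum hterm
    _ = exp (A * (n : ℝ) ^ (1 - p⁻¹)) * ∑ m ∈ Finset.range (n + 1), c m * exp (-(m * t)) := by
        rw [← Finset.mul_sum, Finset.Nat.sum_antidiagonal_eq_sum_range_succ_mk]
    _ ≤ exp (A * (n : ℝ) ^ (1 - p⁻¹)) * expSum c t := by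
        gcongr
        exact (hc.summable t (by positivity)).sum_le_tsum _
          fun m _ => mul_nonneg (hc.nonneg m) (exp_pos _).le
    _ ≤ exp (A * (n : ℝ) ^ (1 - p⁻¹)) * n := by
        gcongr
        exact ((div_lt_one hn0).1 hn).le
    _ = _ := mul_comm ..

lemma eventually_le_sum_range_ceil (hp : 1 < p) (hc : HasExpSumAsymptotics c p K) {b v : ℝ}
    (hb : 0 < b) (hbK : 1 < b ^ (-p) * K) (hv : 0 < v) :
    ∀ᶠ n : ℕ in atTop,
      n ≤ ∑ m ∈ Finset.range ⌈v * n⌉₊, c m * exp (-(m * (b * (n : ℝ) ^ (-p⁻¹)))) := by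
  have hp0 : 0 < p := one_pos.trans hp
  have hpow : Tendsto (fun n : ℕ => (n : ℝ) ^ (1 - p⁻¹)) atTop atTop :=
    (tendsto_rpow_atTop (sub_pos.2 (inv_lt_one_of_one_lt₀ hp))).comp tendsto_natCast_atTop_atTop
  have hdecay : Tendsto (fun n : ℕ => exp (-(v * (b / 2) * (n : ℝ) ^ (1 - p⁻¹)))) atTop (𝓝 0) :=
    tendsto_exp_neg_atTop_nhds_zero.comp (hpow.const_mul_atTop (by positivity))
  have hlim := (hc.tendsto_expSum_rpow_div hp0 hb).sub
    (hdecay.mul (hc.tendsto_expSum_rpow_div hp0 (half_pos hb)))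
  rw [zero_mul, sub_zero] at hlim
  filter_upwards [hlim.eventually_const_lt hbK, eventually_gt_atTop 0] with n hn hn0
  have hn0 : (0 : ℝ) < n := Nat.cast_pos.2 hn0
  set t := b * (n : ℝ) ^ (-p⁻¹) with ht
  have hthalf : b / 2 * (n : ℝ) ^ (-p⁻¹) = t / 2 := div_mul_eq_mul_div ..
  have htpow : v * (b / 2) * (n : ℝ) ^ (1 - p⁻¹) = v * n * (t / 2) := by
    rw [sub_eq_add_neg, rpow_add hn0, rpow_one, ht]
    ring
  rw [hthalf, htpow, ← mul_div_assoc, ← sub_div, one_lt_div hn0] at hn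
  have htail : exp (-(⌈v * n⌉₊ * (t / 2))) * expSum c (t / 2)
      ≤ exp (-(v * n * (t / 2))) * expSum c (t / 2) := by
    have := expSum_nonneg hc.nonneg (t / 2)
    gcongr
    exact Nat.le_ceil _
  linarith [hc.expSum_le_sum_add ⌈v * n⌉₊ (by positivity : 0 < t)]

lemma eventually_le_sum_mul_exp_rpow (hp : 1 < p) (hc : HasExpSumAsymptotics c p K) {A : ℝ}
    (hA : 0 < A) (hAK : (A * (1 - p⁻¹)) ^ p < K) :
    ∀ᶠ n : ℕ in atTop, n * exp (A * (n : ℝ) ^ (1 - p⁻¹))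
      ≤ ∑ q ∈ antidiagonal n, c q.1 * exp (A * (q.2 : ℝ) ^ (1 - p⁻¹)) := by
  have ha : 0 < 1 - p⁻¹ := sub_pos.2 (inv_lt_one_of_one_lt₀ hp)
  have hp0 : 0 < p := one_pos.trans hp
  obtain ⟨u, hu0, hu1, hbK⟩ := exists_one_lt_mul_rpow_neg_mul (mul_pos hA ha) hp0 hAK
  filter_upwards [hc.eventually_le_sum_range_ceil hp (by positivity) hbK (sub_pos.2 hu1),
    eventually_gt_atTop 0] with n hn hn0
  have hn0 : (0 : ℝ) < n := Nat.cast_pos.2 hn0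
  set N := ⌈(1 - u) * n⌉₊
  have hNn : N ≤ n + 1 := Nat.ceil_le.2 (by push_cast; nlinarith)
  have hterm : ∀ m ∈ Finset.range N, exp (A * (n : ℝ) ^ (1 - p⁻¹)) *
      (c m * exp (-(m * (A * (1 - p⁻¹) * u ^ (-p⁻¹) * (n : ℝ) ^ (-p⁻¹)))))
        ≤ c m * exp (A * ((n - m : ℕ) : ℝ) ^ (1 - p⁻¹)) := fun m hm => by
    have hmn : (m : ℝ) < (1 - u) * n := Nat.lt_ceil.1 (Finset.mem_range.1 hm)
    have hle : m ≤ n := by exact_mod_cast (by nlinarith : (m : ℝ) ≤ n)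
    have := exp_rpow_add_mul_le_exp_rpow hA.le ha.le (sub_le_self _ (inv_pos.2 hp0).le) hu0
      m.cast_nonneg (k := n - m) (by simpa using hn0) (by linarith)
    rw [sub_add_cancel, sub_sub_cancel_left, ← Nat.cast_sub hle] at this
    rw [mul_left_comm]
    exact mul_le_mul_of_nonneg_left this (hc.nonneg m)
  rw [Finset.Nat.sum_antidiagonal_eq_sum_range_succ_mk]
  calc _ ≤ exp (A * (n : ℝ) ^ (1 - p⁻¹)) * ∑ m ∈ Finset.range N, _ := by
        rw [mul_comm]
        exact mul_le_mul_of_nonneg_left hn (exp_pos _).le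
    _ ≤ ∑ m ∈ Finset.range N, c m * exp (A * ((n - m : ℕ) : ℝ) ^ (1 - p⁻¹)) := by
        rw [Finset.mul_sum]
        exact Finset.sum_le_sum hterm
    _ ≤ _ := Finset.sum_le_sum_of_subset_of_nonneg (Finset.range_subset_range.2 hNn)
        fun m _ _ => mul_nonneg (hc.nonneg m) (exp_pos _).le

end HasExpSumAsymptotics

lemma tendsto_log_div_nhds_one {ι : Type*} {l : Filter ι} {h φ : ι → ℝ} (hφ : Tendsto φ l atTop)
    (hh : ∀ n, 0 < h n) (hupper : ∀ w > 1, ∃ C > 0, ∀ n, h n ≤ C * exp (w * φ n))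
    (hlower : ∀ w, 0 < w → w < 1 → ∃ C > 0, ∀ n, exp (w * φ n) ≤ C * h n) :
    Tendsto (fun n => log (h n) / φ n) l (𝓝 1) := by
  have hlim (w C : ℝ) : Tendsto (fun n => (w * φ n + C) / φ n) l (𝓝 w) := by
    have : Tendsto (fun n => w + C / φ n) l (𝓝 (w + 0)) :=
      (tendsto_const_nhds.div_atTop hφ).const_add w
    rw [add_zero] at this
    refine this.congr' ?_
    filter_upwards [hφ.eventually_gt_atTop 0] with n hn
    field_simp
  refine tendsto_order.2 ⟨fun v hv => ?_, fun v hv => ?_⟩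
  · obtain ⟨w, hw, hw1⟩ := exists_between (max_lt hv one_pos)
    obtain ⟨C, hC, hle⟩ := hlower w ((le_max_right _ _).trans_lt hw) hw1
    filter_upwards [(hlim w (-log C)).eventually_const_lt ((le_max_left _ _).trans_lt hw),
      hφ.eventually_gt_atTop 0] with n hvn hn
    refine hvn.trans_le (div_le_div_of_nonneg_right ?_ hn.le)
    have := log_le_log (exp_pos _) (hle n)
    rw [log_exp, log_mul hC.ne' (hh n).ne'] at this
    linarith
  · obtain ⟨w, hw1, hw⟩ := exists_between hv
    obtain ⟨C, hC, hle⟩ := hupper w hw1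
    filter_upwards [(hlim w (log C)).eventually_lt_const hw,
      hφ.eventually_gt_atTop 0] with n hvn hn
    refine (div_le_div_of_nonneg_right ?_ hn.le).trans_lt hvn
    have := log_le_log (hh n) (hle n)
    rw [log_mul hC.ne' (exp_pos _).ne', log_exp] at this
    linarith

theorem HasExpSumAsymptotics.tendsto_log_div {c h : ℕ → ℝ} {p K : ℝ} (hp : 1 < p) (hK : 0 < K)
    (hc : HasExpSumAsymptotics c p K) (hh : ∀ n, 0 < h n)
    (hrec : ∀ n : ℕ, n * h n = ∑ q ∈ antidiagonal n, c q.1 * h q.2) :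
    Tendsto (fun n : ℕ => log (h n) / (p / (p - 1) * K ^ (1 / p) * (n : ℝ) ^ ((p - 1) / p)))
      atTop (𝓝 1) := by
  have hp0 : 0 < p := one_pos.trans hp
  have hp1 : 0 < p - 1 := sub_pos.2 hp
  have ha : (p - 1) / p = 1 - p⁻¹ := by field_simp
  set A := p / (p - 1) * K ^ (1 / p)
  have hA : 0 < A := by positivity
  have hcrit {w : ℝ} (hw : 0 < w) : (w * A * (1 - p⁻¹)) ^ p = w ^ p * K := by
    have : w * A * (1 - p⁻¹) = w * K ^ (1 / p) := by rw [← ha]; simp only [A]; field_simp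
    rw [this, mul_rpow hw.le (by positivity), ← rpow_mul hK.le, one_div_mul_cancel hp0.ne',
      rpow_one]
  have hpow : Tendsto (fun n : ℕ => A * (n : ℝ) ^ ((p - 1) / p)) atTop atTop :=
    ((tendsto_rpow_atTop (by positivity)).comp tendsto_natCast_atTop_atTop).const_mul_atTop hA
  rw [ha] at hpow ⊢
  refine tendsto_log_div_nhds_one hpow hh (fun w hw => ?_) fun w hw0 hw1 => ?_ <;>
    simp only [← mul_assoc]
  · have hw0 : 0 < w := one_pos.trans hw
    refine exists_le_mul_of_subsolution_of_supersolution hc.nonneg hc.map_zero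
      (fun _ => exp_pos _) (.of_forall fun n => (hrec n).le)
      (hc.eventually_sum_mul_exp_rpow_le hp (mul_pos hw0 hA) ?_)
    rw [hcrit hw0]
    exact lt_mul_of_one_lt_left hK (one_lt_rpow hw hp0)
  · refine exists_le_mul_of_subsolution_of_supersolution hc.nonneg hc.map_zero hh
      (hc.eventually_le_sum_mul_exp_rpow hp (mul_pos hw0 hA) ?_)
      (.of_forall fun n => (hrec n).ge)
    rw [hcrit hw0]
    exact mul_lt_of_lt_one_left hK (rpow_lt_one hw0.le hw1 hp0)

/-! ### Marking a point in a permutation action -/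

section PermutationActions

open Equiv

variable {G α β γ : Type*} [Group G]

instance finite_monoidHom {M : Type*} [Monoid M] [Finite M] [Group.FG G] : Finite (G →* M) := by
  obtain ⟨S, hS⟩ := Group.fg_def.mp ‹Group.FG G›
  refine Finite.of_injective (fun (φ : G →* M) (s : S) => φ s) fun φ ψ h => ?_
  exact MonoidHom.eq_of_eqOn_dense hS fun s hs => congrFun h ⟨s, hs⟩

/-- The number of orbits of the action of `G` on `α` given by `φ`. -/
def orbitCount (φ : G →* Perm α) : ℕ :=
  Nat.card (MulAction.orbitRel.Quotient φ.range α)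

lemma orbitRel_range_iff {φ : G →* Perm α} {a b : α} :
    MulAction.orbitRel φ.range α a b ↔ ∃ g, φ g b = a := by
  simp [MulAction.orbitRel_apply, MulAction.mem_orbit_iff, Subgroup.smul_def]

lemma orbitCount_le {n : ℕ} (φ : G →* Perm (Fin n)) : orbitCount φ ≤ n := by
  simpa [orbitCount, MulAction.orbitRel.Quotient] using Nat.card_le_card_of_surjective _
    (Quotient.mk_surjective (s := MulAction.orbitRel φ.range (Fin n)))

/-- The map `e` is equivariant from the `G`-set `γ` to `α` with the action given by `φ`. -/
def IsEquivariant [MulAction G γ] (φ : G →* Perm α) (e : γ → α) : Prop :=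
  ∀ g c, φ g (e c) = e (g • c)

section SumAction

variable [MulAction G γ]

/-- The action of `G` on `α ≃ γ ⊕ β` which is the given one on `γ` and is `ψ` on `β`. -/
def sumAction (f : γ ⊕ β ≃ α) (ψ : G →* Perm β) : G →* Perm α :=
  f.permCongrHom.toMonoidHom.comp
    ((Perm.sumCongrHom γ β).comp ((MulAction.toPermHom G γ).prod ψ))

lemma sumAction_apply_inl (f : γ ⊕ β ≃ α) (ψ : G →* Perm β) (g : G) (c : γ) :
    sumAction f ψ g (f (.inl c)) = f (.inl (g • c)) := by
  simp [sumAction, permCongrHom]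

lemma sumAction_apply_inr (f : γ ⊕ β ≃ α) (ψ : G →* Perm β) (g : G) (b : β) :
    sumAction f ψ g (f (.inr b)) = f (.inr (ψ g b)) := by
  simp [sumAction, permCongrHom]

lemma sumAction_injective (f : γ ⊕ β ≃ α) :
    Function.Injective (sumAction f : (G →* Perm β) → G →* Perm α) := by
  intro ψ ψ' h
  ext g b
  apply Sum.inr_injective (α := γ)
  apply f.injective
  rw [← sumAction_apply_inr, h, sumAction_apply_inr]

lemma range_sumAction [Finite γ] [Finite β] (f : γ ⊕ β ≃ α) :
    Set.range (sumAction f) = {φ : G →* Perm α | IsEquivariant φ (f ∘ .inl)} := by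
  refine Set.Subset.antisymm (Set.range_subset_iff.2 fun ψ g c => sumAction_apply_inl f ψ g c)
    fun φ hφ => ?_
  let φ' : G →* Perm (γ ⊕ β) := f.symm.permCongrHom.toMonoidHom.comp φ
  have hφ' (g : G) (s : γ ⊕ β) : φ' g s = f.symm (φ g (f s)) := by simp [φ', permCongrHom]
  have mem_range (g : G) : φ' g ∈ (Perm.sumCongrHom γ β).range := by
    refine Perm.mem_sumCongrHom_range_of_perm_mapsTo_inl ?_
    rintro _ ⟨c, rfl⟩
    exact ⟨g • c, f.injective (by simpa [hφ'] using (hφ g c).symm)⟩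
  let split := MonoidHom.ofInjective (Perm.sumCongrHom_injective (α := γ) (β := β))
  let w : G →* Perm γ × Perm β := split.symm.toMonoidHom.comp (φ'.codRestrict _ mem_range)
  have hw (g : G) : Perm.sumCongrHom γ β (w g) = φ' g :=
    MonoidHom.apply_ofInjective_symm Perm.sumCongrHom_injective (φ'.codRestrict _ mem_range g)
  refine ⟨(MonoidHom.snd _ _).comp w, MonoidHom.ext fun g => Perm.ext fun a => ?_⟩
  obtain ⟨c | b, rfl⟩ := f.surjective a
  · rw [sumAction_apply_inl]
    exact (hφ g c).symm
  · have h := DFunLike.congr_fun (hw g) (Sum.inr b)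
    rw [hφ', eq_symm_apply] at h
    rw [sumAction_apply_inr, ← h]
    rfl

lemma orbitCount_sumAction [Finite β] [Nonempty γ] [MulAction.IsPretransitive G γ]
    (f : γ ⊕ β ≃ α) (ψ : G →* Perm β) : orbitCount (sumAction f ψ) = orbitCount ψ + 1 := by
  obtain ⟨c₀⟩ := ‹Nonempty γ›
  let toOrbit : Option (MulAction.orbitRel.Quotient ψ.range β) →
      MulAction.orbitRel.Quotient (sumAction f ψ).range α := fun o =>
    o.elim (Quotient.mk _ (f (.inl c₀))) <| Quotient.map' (f ∘ .inr) fun b b' h => by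
      obtain ⟨g, rfl⟩ := orbitRel_range_iff.1 h
      exact orbitRel_range_iff.2 ⟨g, sumAction_apply_inr f ψ g b'⟩
  have orbit_eq_iff {a a' : α} : (Quotient.mk _ a : MulAction.orbitRel.Quotient
      (sumAction f ψ).range α) = Quotient.mk _ a' ↔ ∃ g, sumAction f ψ g a' = a :=
    Quotient.eq.trans orbitRel_range_iff
  have bijective : Function.Bijective toOrbit := by
    constructor
    · rintro (_ | ⟨⟨b⟩⟩) (_ | ⟨⟨b'⟩⟩) h <;> obtain ⟨g, hg⟩ := orbit_eq_iff.1 h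
      · rfl
      · simp [sumAction_apply_inr] at hg
      · simp [sumAction_apply_inl] at hg
      · have : ψ g b' = b := by simpa [sumAction_apply_inr] using hg
        exact congrArg some (Quotient.sound (orbitRel_range_iff.2 ⟨g, this⟩))
    · rintro ⟨a⟩
      obtain ⟨c | b, rfl⟩ := f.surjective a
      · obtain ⟨g, rfl⟩ := MulAction.exists_smul_eq G c c₀
        exact ⟨none, orbit_eq_iff.2 ⟨g, sumAction_apply_inl f ψ g c⟩⟩
      · exact ⟨some (Quotient.mk _ b), rfl⟩
  rw [orbitCount, ← Nat.card_congr (.ofBijective toOrbit bijective), Finite.card_option, orbitCount]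

end SumAction

/-- The stabilizer of `a` in the action of `G` on `α` given by `φ`. -/
def pointStabilizer (φ : G →* Perm α) (a : α) : Subgroup G :=
  (MulAction.stabilizer (Perm α) a).comap φ

lemma mem_pointStabilizer {φ : G →* Perm α} {a : α} {g : G} :
    g ∈ pointStabilizer φ a ↔ φ g a = a := Iff.rfl

lemma pointStabilizer_of_isEquivariant {φ : G →* Perm α} {H : Subgroup G} (e : G ⧸ H ↪ α)
    (he : IsEquivariant φ e) : pointStabilizer φ (e (1 : G)) = H := by
  ext g
  rw [mem_pointStabilizer, he, e.injective.eq_iff, ← MulAction.mem_stabilizer_iff,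
    MulAction.stabilizer_quotient]

lemma exists_isEquivariant_apply_one (φ : G →* Perm α) (a : α) :
    ∃ e : G ⧸ pointStabilizer φ a ↪ α, IsEquivariant φ e ∧ e (1 : G) = a := by
  let _ : MulAction G α := MulAction.compHom α φ
  refine ⟨⟨MulAction.ofQuotientStabilizer G a, MulAction.injective_ofQuotientStabilizer G a⟩,
    fun g q => (MulAction.ofQuotientStabilizer_smul G a g q).symm, ?_⟩
  exact (MulAction.ofQuotientStabilizer_mk G a 1).trans (one_smul G a)

lemma IsEquivariant.ext_apply_one {φ : G →* Perm α} {H : Subgroup G} {e e' : G ⧸ H → α}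
    (he : IsEquivariant φ e) (he' : IsEquivariant φ e') (h : e (1 : G) = e' (1 : G)) : e = e' := by
  funext q
  obtain ⟨g, rfl⟩ := QuotientGroup.mk_surjective q
  have hg : (g : G ⧸ H) = g • ((1 : G) : G ⧸ H) := by simp
  rw [hg, ← he, ← he', h]

lemma card_isEquivariant_embedding (φ : G →* Perm α) (H : Subgroup G) :
    Nat.card {e : G ⧸ H ↪ α // IsEquivariant φ e} = Nat.card {a // pointStabilizer φ a = H} := by
  refine Nat.card_congr (.ofBijective
    (fun e => ⟨e.1 (1 : G), pointStabilizer_of_isEquivariant e.1 e.2⟩) ⟨fun e e' h => ?_, ?_⟩)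
  · exact Subtype.ext (DFunLike.coe_injective (e.2.ext_apply_one e'.2 (congrArg Subtype.val h)))
  · rintro ⟨a, rfl⟩
    obtain ⟨e, he, hea⟩ := exists_isEquivariant_apply_one φ a
    exact ⟨⟨e, he⟩, Subtype.ext hea⟩

lemma index_pointStabilizer_ne_zero [Finite α] (φ : G →* Perm α) (a : α) :
    (pointStabilizer φ a).index ≠ 0 := by
  obtain ⟨e, -, -⟩ := exists_isEquivariant_apply_one φ a
  have : Finite (G ⧸ pointStabilizer φ a) := .of_injective e e.injective
  exact Nat.card_pos.ne'

lemma index_pointStabilizer_le {n : ℕ} (φ : G →* Perm (Fin n)) (a : Fin n) :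
    (pointStabilizer φ a).index ≤ n := by
  obtain ⟨e, -, -⟩ := exists_isEquivariant_apply_one φ a
  exact (Nat.card_le_card_of_injective e e.injective).trans_eq (Nat.card_fin n)

variable (G) in
/-- The number of subgroups of `G` of index `m`, as a function of `m ≠ 0`. Subgroups of infinite
index, which have `Subgroup.index` equal to `0`, are not counted. -/
def subgroupCount : ArithmeticFunction ℕ where
  toFun m := if m = 0 then 0 else Nat.card {H : Subgroup G // H.index = m}
  map_zero' := if_pos rfl

lemma subgroupCount_apply_of_ne_zero {m : ℕ} (hm : m ≠ 0) :
    subgroupCount G m = Nat.card {H : Subgroup G // H.index = m} := if_neg hm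

variable [Group.FG G]

lemma finite_subgroup_index_eq {m : ℕ} (hm : m ≠ 0) : Finite {H : Subgroup G // H.index = m} := by
  refine ((Set.finite_range fun p : (G →* Perm (Fin m)) × Fin m =>
    pointStabilizer p.1 p.2).subset fun H (hH : H.index = m) => ?_).to_subtype
  have : H.FiniteIndex := ⟨hH.trans_ne hm⟩
  let e : G ⧸ H ≃ Fin m := Finite.equivFinOfCardEq hH
  refine ⟨(e.permCongrHom.toMonoidHom.comp (MulAction.toPermHom G (G ⧸ H)), e (1 : G)), ?_⟩
  exact pointStabilizer_of_isEquivariant e.toEmbedding fun g q => by simp [permCongrHom]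

instance fintypeMonoidHom {M : Type*} [Monoid M] [Finite M] : Fintype (G →* M) := .ofFinite _

variable {R : Type*} [CommSemiring R] (x : R)

variable (G) in
/-- The generating polynomial, evaluated at `x`, of the number of orbits of the actions of `G`
on `n` points. -/
def orbitSum (n : ℕ) : R := ∑ φ : G →* Perm (Fin n), x ^ orbitCount φ

lemma exists_sumEquiv_extend {n : ℕ} (e : γ ↪ Fin n) :
    ∃ f : γ ⊕ Fin (n - Nat.card γ) ≃ Fin n, f ∘ .inl = e := by
  classical
  have : Finite γ := .of_injective e e.injective
  have card_compl : Nat.card ((Set.range e)ᶜ : Set (Fin n)) = n - Nat.card γ := by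
    rw [Nat.card_coe_set_eq, Set.ncard_compl, Nat.card_fin, ← Nat.card_coe_set_eq,
      Nat.card_range_of_injective e.injective]
  exact ⟨((ofInjective e e.injective).sumCongr (Finite.equivFinOfCardEq card_compl).symm).trans
    (Set.sumCompl (Set.range e)), funext fun c => by simp⟩

open Classical in
lemma sum_isEquivariant_pow_orbitCount [MulAction G γ] [Nonempty γ] [MulAction.IsPretransitive G γ]
    {n : ℕ} (e : γ ↪ Fin n) :
    ∑ φ : G →* Perm (Fin n) with IsEquivariant φ e, x ^ orbitCount φ =
      x * orbitSum G x (n - Nat.card γ) := by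
  have : Finite γ := .of_injective e e.injective
  obtain ⟨f, hf⟩ := exists_sumEquiv_extend e
  have filter_eq : ({φ | IsEquivariant φ e} : Finset (G →* Perm (Fin n))) =
      Finset.univ.map ⟨sumAction f, sumAction_injective f⟩ := by
    apply Finset.coe_injective
    simpa [hf] using (range_sumAction (G := G) f).symm
  simp [filter_eq, orbitCount_sumAction, orbitSum, Finset.mul_sum, pow_succ']

lemma sum_card_pointStabilizer_eq_mul_pow (n : ℕ) (H : Subgroup G) [H.FiniteIndex] :
    ∑ φ : G →* Perm (Fin n), Nat.card {a // pointStabilizer φ a = H} * x ^ orbitCount φ =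
      n.descFactorial H.index * (x * orbitSum G x (n - H.index)) := by
  classical
  have := Fintype.ofFinite (G ⧸ H)
  calc ∑ φ : G →* Perm (Fin n), Nat.card {a // pointStabilizer φ a = H} * x ^ orbitCount φ
      = ∑ φ : G →* Perm (Fin n), ∑ e : G ⧸ H ↪ Fin n,
          if IsEquivariant φ e then x ^ orbitCount φ else 0 := by
        simp_rw [← card_isEquivariant_embedding, Nat.card_eq_fintype_card, Fintype.card_subtype,
          ← Finset.sum_filter, Finset.sum_const, nsmul_eq_mul]
    _ = ∑ _ : G ⧸ H ↪ Fin n, x * orbitSum G x (n - H.index) := by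
        rw [Finset.sum_comm]
        simp_rw [← Finset.sum_filter, sum_isEquivariant_pow_orbitCount, Subgroup.index]
    _ = n.descFactorial H.index * (x * orbitSum G x (n - H.index)) := by
        simp [Subgroup.index, Nat.card_eq_fintype_card]

lemma sum_card_index_pointStabilizer_eq_mul_pow (n m : ℕ) :
    ∑ φ : G →* Perm (Fin n),
        Nat.card {a // (pointStabilizer φ a).index = m} * x ^ orbitCount φ =
      subgroupCount G m * n.descFactorial m * (x * orbitSum G x (n - m)) := by
  obtain rfl | hm := eq_or_ne m 0
  · simp [index_pointStabilizer_ne_zero]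
  have := finite_subgroup_index_eq (G := G) hm
  have := Fintype.ofFinite {H : Subgroup G // H.index = m}
  have card_eq_sum (φ : G →* Perm (Fin n)) : Nat.card {a // (pointStabilizer φ a).index = m} =
      ∑ H : {H : Subgroup G // H.index = m}, Nat.card {a // pointStabilizer φ a = H} := by
    rw [← Nat.card_sigma]
    exact (Nat.card_congr (sigmaSubtypeFiberEquivSubtype (q := (·.index = m)) (pointStabilizer φ)
      fun _ => .rfl)).symm
  have sum_eq (H : {H : Subgroup G // H.index = m}) :
      ∑ φ : G →* Perm (Fin n), Nat.card {a // pointStabilizer φ a = H} * x ^ orbitCount φ =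
        n.descFactorial m * (x * orbitSum G x (n - m)) := by
    have : H.1.FiniteIndex := ⟨H.2.trans_ne hm⟩
    rw [sum_card_pointStabilizer_eq_mul_pow, H.2]
  simp_rw [card_eq_sum, Nat.cast_sum, Finset.sum_mul]
  rw [Finset.sum_comm, Finset.sum_congr rfl fun H _ => sum_eq H]
  simp [subgroupCount_apply_of_ne_zero hm, Nat.card_eq_fintype_card, mul_assoc]

theorem natCast_mul_orbitSum (n : ℕ) :
    n * orbitSum G x n = ∑ q ∈ antidiagonal n,
      subgroupCount G q.1 * n.descFactorial q.1 * (x * orbitSum G x q.2) := by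
  classical
  have card_points (φ : G →* Perm (Fin n)) :
      n = ∑ m ∈ Finset.range (n + 1), Nat.card {a // (pointStabilizer φ a).index = m} := by
    simpa [Fintype.card_subtype] using Finset.card_eq_sum_card_fiberwise (s := Finset.univ)
      fun a _ => Finset.mem_range_succ_iff.2 (index_pointStabilizer_le φ a)
  calc n * orbitSum G x n
      = ∑ φ : G →* Perm (Fin n), ∑ m ∈ Finset.range (n + 1),
          Nat.card {a // (pointStabilizer φ a).index = m} * x ^ orbitCount φ := by
        simp_rw [← Finset.sum_mul, ← Nat.cast_sum, ← card_points, orbitSum, Finset.mul_sum]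
    _ = ∑ m ∈ Finset.range (n + 1),
          subgroupCount G m * n.descFactorial m * (x * orbitSum G x (n - m)) := by
        rw [Finset.sum_comm]
        simp_rw [sum_card_index_pointStabilizer_eq_mul_pow]
    _ = _ := (Finset.Nat.sum_antidiagonal_eq_sum_range_succ
        (fun m k => subgroupCount G m * n.descFactorial m * (x * orbitSum G x k)) n).symm

end PermutationActions

/-! ### Subgroups of finite index of `ℤ ^ l` -/

section SubgroupsOfProducts

variable {B G : Type*} [CommGroup B] [CommGroup G]

lemma index_eq_index_map_fst_mul_index_comap_inr (L : Subgroup (B × G)) :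
    L.index = (L.map (.fst B G)).index * (L.comap (.inr B G)).index := by
  have range_inr : (MonoidHom.inr B G).range = (MonoidHom.fst B G).ker := by
    ext ⟨b, g⟩
    simp [Subgroup.mem_prod, eq_comm]
  rw [← Subgroup.index_comap_of_surjective (f := .fst B G) _ Prod.fst_surjective,
    Subgroup.comap_map_eq, Subgroup.index_comap, range_inr, ← Subgroup.relIndex_sup_left,
    mul_comm, Subgroup.relIndex_mul_index le_sup_left]

/-- The subgroup of `B × G` generated by `1 × M` and by `(z, g)` for any `g` in the class `c`. -/
def cyclicExtension (z : B) (M : Subgroup G) (c : G ⧸ M) : Subgroup (B × G) :=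
  (Subgroup.zpowers (z, c)).comap ((MonoidHom.id B).prodMap (QuotientGroup.mk' M))

lemma mem_cyclicExtension {z b : B} {M : Subgroup G} {c : G ⧸ M} {g : G} :
    (b, g) ∈ cyclicExtension z M c ↔ ∃ k : ℤ, z ^ k = b ∧ c ^ k = g := by
  simp [cyclicExtension, Subgroup.mem_zpowers_iff]

lemma map_fst_cyclicExtension (z : B) (M : Subgroup G) (c : G ⧸ M) :
    (cyclicExtension z M c).map (.fst B G) = Subgroup.zpowers z := by
  ext b
  constructor
  · rintro ⟨⟨_, g⟩, h, rfl⟩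
    obtain ⟨k, hk, -⟩ := mem_cyclicExtension.1 h
    exact ⟨k, hk⟩
  · rintro ⟨k, rfl⟩
    obtain ⟨g, hg⟩ := QuotientGroup.mk_surjective (c ^ k)
    exact ⟨(z ^ k, g), mem_cyclicExtension.2 ⟨k, rfl, hg.symm⟩, rfl⟩

variable {z : B} {M : Subgroup G}

lemma comap_inr_cyclicExtension (hz : ¬IsOfFinOrder z) (c : G ⧸ M) :
    (cyclicExtension z M c).comap (.inr B G) = M := by
  ext g
  rw [Subgroup.mem_comap, MonoidHom.inr_apply, mem_cyclicExtension, ← QuotientGroup.eq_one_iff]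
  constructor
  · rintro ⟨k, hk, hg⟩
    obtain rfl : k = 0 := injective_zpow_iff_not_isOfFinOrder.2 hz (by simpa using hk)
    simpa using hg.symm
  · exact fun hg => ⟨0, zpow_zero z, by rw [hg, zpow_zero]⟩

lemma cyclicExtension_injective (hz : ¬IsOfFinOrder z) :
    Function.Injective (cyclicExtension z M) := by
  intro c c' h
  obtain ⟨g, rfl⟩ := QuotientGroup.mk_surjective c
  have hg : (z, g) ∈ cyclicExtension z M g := mem_cyclicExtension.2 ⟨1, zpow_one z, zpow_one _⟩
  obtain ⟨k, hk, hc'⟩ := mem_cyclicExtension.1 (h ▸ hg)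
  obtain rfl : k = 1 := injective_zpow_iff_not_isOfFinOrder.2 hz (by simpa using hk)
  simpa using hc'.symm

lemma exists_cyclicExtension_eq {L : Subgroup (B × G)}
    (hfst : L.map (.fst B G) = Subgroup.zpowers z) (hinr : L.comap (.inr B G) = M) :
    ∃ c, cyclicExtension z M c = L := by
  obtain ⟨v, hv⟩ : ∃ v, (z, v) ∈ L := by
    simpa [Subgroup.mem_map] using hfst.ge (Subgroup.mem_zpowers z)
  have mem_iff (k : ℤ) (g : G) : (z ^ k, g) ∈ L ↔ (v : G ⧸ M) ^ k = g := by
    have hk : ((1, (v ^ k)⁻¹ * g) : B × G) = (z, v)⁻¹ ^ k * (z ^ k, g) := by simp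
    rw [← QuotientGroup.mk_zpow, QuotientGroup.eq, ← hinr, Subgroup.mem_comap,
      MonoidHom.inr_apply, hk, L.mul_mem_cancel_left (L.zpow_mem (L.inv_mem hv) k)]
  refine ⟨v, Subgroup.ext fun ⟨b, g⟩ => mem_cyclicExtension.trans ⟨?_, fun h => ?_⟩⟩
  · rintro ⟨k, rfl, hg⟩
    exact (mem_iff k g).2 hg
  · obtain ⟨k, rfl⟩ : b ∈ Subgroup.zpowers z := hfst ▸ ⟨(b, g), h, rfl⟩
    exact ⟨k, rfl, (mem_iff k g).1 h⟩

lemma card_subgroup_prod_of_map_fst_of_comap_inr (hz : ¬IsOfFinOrder z) :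
    Nat.card {L : Subgroup (B × G) //
      L.map (.fst B G) = Subgroup.zpowers z ∧ L.comap (.inr B G) = M} = M.index := by
  refine (Nat.card_congr (.ofBijective (fun c => ⟨cyclicExtension z M c,
    map_fst_cyclicExtension z M c, comap_inr_cyclicExtension hz c⟩) ⟨fun c c' h => ?_, ?_⟩)).symm
  · exact cyclicExtension_injective hz (congrArg Subtype.val h)
  · rintro ⟨L, hfst, hinr⟩
    obtain ⟨c, rfl⟩ := exists_cyclicExtension_eq hfst hinr
    exact ⟨c, rfl⟩

end SubgroupsOfProducts

/-- A subgroup `L` of `B × G` of index `m` determines the index `e` of its projection to `B` and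
its intersection `M` with `G`, where `e * M.index = m`. -/
def subgroupProdEquiv (B G : Type*) [CommGroup B] [CommGroup G] {m : ℕ} (hm : m ≠ 0) :
    {L : Subgroup (B × G) // L.index = m} ≃
      Σ p : m.divisorsAntidiagonal, Σ M : {M : Subgroup G // M.index = p.1.2},
        {L : Subgroup (B × G) // (L.map (.fst B G)).index = p.1.1 ∧ L.comap (.inr B G) = M} where
  toFun L := ⟨⟨((L.1.map (.fst B G)).index, (L.1.comap (.inr B G)).index),
      Nat.mem_divisorsAntidiagonal.2
        ⟨(index_eq_index_map_fst_mul_index_comap_inr L.1).symm.trans L.2, hm⟩⟩,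
    ⟨L.1.comap (.inr B G), rfl⟩, L.1, rfl, rfl⟩
  invFun q := ⟨q.2.2.1, by
    rw [index_eq_index_map_fst_mul_index_comap_inr, q.2.2.2.1, q.2.2.2.2, q.2.1.2,
      (Nat.mem_divisorsAntidiagonal.1 q.1.2).1]⟩
  right_inv := by
    rintro ⟨⟨⟨e, d⟩, _⟩, ⟨M, hM : _ = d⟩, L, hfst : _ = e, hinr : _ = M⟩
    subst hfst hinr hM
    rfl

section SubgroupsOfIntProd

open Multiplicative

lemma index_eq_iff_eq_zpowers {S : Subgroup (Multiplicative ℤ)} {e : ℕ} :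
    S.index = e ↔ S = Subgroup.zpowers (ofAdd (e : ℤ)) := by
  have index_zpowers (z : Multiplicative ℤ) : (Subgroup.zpowers z).index = z.toAdd.natAbs :=
    Int.index_zmultiples z.toAdd
  obtain ⟨z, rfl⟩ := Subgroup.isCyclic_iff_exists_zpowers_eq_top S |>.1 inferInstance
  constructor
  · rintro rfl
    rw [index_zpowers]
    exact (congrArg AddSubgroup.toSubgroup (Int.zmultiples_natAbs z.toAdd)).symm
  · rintro h
    rw [h, index_zpowers, toAdd_ofAdd, Int.natAbs_natCast]

variable {G : Type*} [CommGroup G]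

lemma card_subgroup_int_prod_of_index_of_comap_inr (M : Subgroup G) {e : ℕ} (he : e ≠ 0) :
    Nat.card {L : Subgroup (Multiplicative ℤ × G) //
      (L.map (.fst _ G)).index = e ∧ L.comap (.inr _ G) = M} = M.index := by
  have not_isOfFinOrder : ¬IsOfFinOrder (ofAdd (e : ℤ)) := by
    rw [isOfFinOrder_iff_eq_one]
    simpa using he
  simp_rw [index_eq_iff_eq_zpowers]
  exact card_subgroup_prod_of_map_fst_of_comap_inr not_isOfFinOrder

open ArithmeticFunction in
theorem subgroupCount_int_prod [Group.FG G] :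
    subgroupCount (Multiplicative ℤ × G) = zeta * ArithmeticFunction.id.pmul (subgroupCount G) := by
  ext m
  obtain rfl | hm := eq_or_ne m 0
  · simp
  rw [subgroupCount_apply_of_ne_zero hm, mul_apply, Nat.card_congr (subgroupProdEquiv _ G hm)]
  have ne_zero (p : m.divisorsAntidiagonal) : p.1.1 ≠ 0 ∧ p.1.2 ≠ 0 := by
    rw [← mul_ne_zero_iff, (Nat.mem_divisorsAntidiagonal.1 p.2).1]
    exact hm
  have card_fiber (p : m.divisorsAntidiagonal) (M : {M : Subgroup G // M.index = p.1.2}) :=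
    (card_subgroup_int_prod_of_index_of_comap_inr M.1 (ne_zero p).1).trans M.2
  have finite_fiber (p : m.divisorsAntidiagonal) (M : {M : Subgroup G // M.index = p.1.2}) :=
    Nat.finite_of_card_ne_zero ((card_fiber p M).trans_ne (ne_zero p).2)
  have finite_index (p : m.divisorsAntidiagonal) := finite_subgroup_index_eq (G := G) (ne_zero p).2
  have fintype_index (p : m.divisorsAntidiagonal) :=
    Fintype.ofFinite {M : Subgroup G // M.index = p.1.2}
  rw [Nat.card_sigma, ← Finset.sum_coe_sort m.divisorsAntidiagonal]
  refine Finset.sum_congr rfl fun p _ => ?_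
  rw [Nat.card_sigma, Finset.sum_congr rfl fun M _ => card_fiber p M]
  simp [zeta_apply_ne (ne_zero p).1, subgroupCount_apply_of_ne_zero (ne_zero p).2, mul_comm]

end SubgroupsOfIntProd

lemma subgroupCount_congr {G G' : Type*} [Group G] [Group G'] (e : G ≃* G') :
    subgroupCount G = subgroupCount G' := by
  ext m
  obtain rfl | hm := eq_or_ne m 0
  · simp
  rw [subgroupCount_apply_of_ne_zero hm, subgroupCount_apply_of_ne_zero hm]
  refine Nat.card_congr (e.mapSubgroup.toEquiv.subtypeEquiv fun H => ?_)
  exact (H.index_map_equiv e).congr_left.symm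

lemma subgroupCount_of_subsingleton {G : Type*} [Group G] [Subsingleton G] :
    subgroupCount G = 1 := by
  ext m
  obtain rfl | hm := eq_or_ne m 0
  · simp
  rw [subgroupCount_apply_of_ne_zero hm]
  obtain rfl | hm1 := eq_or_ne m 1
  · simp
  · have : IsEmpty {H : Subgroup G // H.index = m} :=
      ⟨fun H => hm1 (H.2.symm.trans (by rw [Subsingleton.elim H.1 ⊤, Subgroup.index_top]))⟩
    rw [Nat.card_of_isEmpty, ArithmeticFunction.one_apply_ne hm1]

lemma id_pmul_mul (f g : ArithmeticFunction ℕ) :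
    ArithmeticFunction.id.pmul (f * g) =
      ArithmeticFunction.id.pmul f * ArithmeticFunction.id.pmul g := by
  ext n
  simp only [ArithmeticFunction.pmul_apply, ArithmeticFunction.mul_apply, Finset.mul_sum,
    ArithmeticFunction.id_apply]
  refine Finset.sum_congr rfl fun p hp => ?_
  rw [← (Nat.mem_divisorsAntidiagonal.1 hp).1]
  ring

lemma id_pmul_prod_pow (l : ℕ) :
    ArithmeticFunction.id.pmul (∏ i ∈ Finset.range l, ArithmeticFunction.pow i) =
      ∏ i ∈ Finset.range l, ArithmeticFunction.pow (i + 1) := by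
  induction l with
  | zero =>
    ext n
    by_cases hn : n = 1 <;> simp [hn]
  | succ l ih =>
    have id_pmul_pow : ArithmeticFunction.id.pmul (ArithmeticFunction.pow l) =
        ArithmeticFunction.pow (l + 1) := by
      ext n
      by_cases hn : n = 0 <;> simp [hn, ArithmeticFunction.pow_apply, pow_succ']
    rw [Finset.prod_range_succ, Finset.prod_range_succ, id_pmul_mul, ih, id_pmul_pow]

theorem subgroupCount_pi_int (l : ℕ) : subgroupCount (Fin l → Multiplicative ℤ) =
    ∏ i ∈ Finset.range l, ArithmeticFunction.pow i := by
  induction l with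
  | zero => rw [subgroupCount_of_subsingleton, Finset.prod_range_zero]
  | succ l ih =>
    let e : Multiplicative ℤ × (Fin l → Multiplicative ℤ) ≃* (Fin (l + 1) → Multiplicative ℤ) :=
      { Fin.consEquiv fun _ => Multiplicative ℤ with
        map_mul' _ _ := funext <| Fin.cases rfl fun _ => rfl }
    rw [← subgroupCount_congr e, subgroupCount_int_prod, ih, id_pmul_prod_pow,
      Finset.prod_range_succ', mul_comm, ArithmeticFunction.pow_zero_eq_zeta]

/-! ### Commuting tuples as homomorphisms from `ℤ ^ l` -/

section CommutingTuples

variable {ι M : Type*} [Group M]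

lemma forall_mul_comm_iff_pairwise_commute_zpowersHom {σ : ι → M} :
    (∀ i j, σ i * σ j = σ j * σ i) ↔
      Pairwise fun i j => ∀ a b, Commute (zpowersHom M (σ i) a) (zpowersHom M (σ j) b) := by
  constructor
  · intro h i j _ a b
    simpa using Commute.zpow_zpow (h i j) a.toAdd b.toAdd
  · intro h i j
    obtain rfl | hij := eq_or_ne i j
    · rfl
    · exact Commute.eq (by simpa using h hij (.ofAdd 1) (.ofAdd 1))

variable [Fintype ι] [DecidableEq ι]

/-- A commuting family in `M` is the image of the standard basis under a unique homomorphism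
`ℤ ^ ι → M`. -/
def commutingFamilyEquivMonoidHom :
    {σ : ι → M // ∀ i j, σ i * σ j = σ j * σ i} ≃ ((ι → Multiplicative ℤ) →* M) :=
  ((Equiv.piCongrRight fun _ => zpowersHom M).subtypeEquiv
    fun _ => forall_mul_comm_iff_pairwise_commute_zpowersHom).trans MonoidHom.noncommPiCoprodEquiv

lemma range_commutingFamilyEquivMonoidHom (σ : {σ : ι → M // ∀ i j, σ i * σ j = σ j * σ i}) :
    (commutingFamilyEquivMonoidHom σ).range = Subgroup.closure (Set.range σ.1) := by
  have zpowers_eq (i : ι) : (zpowersHom M (σ.1 i)).range = Subgroup.closure {σ.1 i} :=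
    (Subgroup.range_zpowersHom _).trans (Subgroup.zpowers_eq_closure _)
  rw [← Set.iUnion_singleton_eq_range, Subgroup.closure_iUnion]
  simp_rw [← zpowers_eq]
  exact MonoidHom.noncommPiCoprod_range _
    (hcomm := forall_mul_comm_iff_pairwise_commute_zpowersHom.1 σ.2)

lemma kappa_eq_orbitCount {l n : ℕ}
    (σ : {σ : Fin l → Equiv.Perm (Fin n) // ∀ i j, σ i * σ j = σ j * σ i}) :
    kappa σ.1 = orbitCount (commutingFamilyEquivMonoidHom σ) := by
  rw [kappa, orbitCount, range_commutingFamilyEquivMonoidHom]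

lemma Acount_eq_card_orbitCount (l n k : ℕ) :
    Acount l n k =
      Nat.card {φ : (Fin l → Multiplicative ℤ) →* Equiv.Perm (Fin n) // orbitCount φ = k} :=
  Nat.card_congr <| (Equiv.subtypeSubtypeEquivSubtypeInter _ (kappa · = k)).symm.trans <|
    commutingFamilyEquivMonoidHom.subtypeEquiv fun σ => by rw [kappa_eq_orbitCount]

lemma Hpoly_eq_orbitSum_div (l n : ℕ) (x : ℝ) :
    Hpoly l n x = orbitSum (Fin l → Multiplicative ℤ) x n / n.factorial := by
  rw [Hpoly, one_div_mul_eq_div, orbitSum, ← Finset.sum_fiberwise_of_maps_to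
    fun φ _ => Finset.mem_range_succ_iff.2 (orbitCount_le φ)]
  congr! 2 with k
  rw [Finset.sum_congr rfl fun φ hφ => by rw [(Finset.mem_filter.1 hφ).2],
    Acount_eq_card_orbitCount, Nat.card_eq_fintype_card, Fintype.card_subtype, Finset.sum_const,
    nsmul_eq_mul]

lemma Hpoly_pos (l n : ℕ) {x : ℝ} (hx : 0 < x) : 0 < Hpoly l n x := by
  rw [Hpoly_eq_orbitSum_div]
  exact div_pos (Finset.sum_pos (fun φ _ => pow_pos hx _) ⟨1, Finset.mem_univ _⟩) (by positivity)

theorem natCast_mul_Hpoly (l : ℕ) (x : ℝ) (n : ℕ) :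
    n * Hpoly l n x = ∑ q ∈ antidiagonal n,
      x * (∏ i ∈ Finset.range l, ArithmeticFunction.pow i : ArithmeticFunction ℕ) q.1 *
        Hpoly l q.2 x := by
  rw [Hpoly_eq_orbitSum_div, ← mul_div_assoc, natCast_mul_orbitSum, Finset.sum_div]
  refine Finset.sum_congr rfl fun q hq => ?_
  obtain rfl : q.1 + q.2 = n := mem_antidiagonal.1 hq
  have factorial_eq : (q.2.factorial * (q.1 + q.2).descFactorial q.1 : ℝ) =
      (q.1 + q.2).factorial := by
    have := Nat.factorial_mul_descFactorial (Nat.le_add_right q.1 q.2)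
    rw [Nat.add_sub_cancel_left] at this
    exact_mod_cast this
  rw [Hpoly_eq_orbitSum_div, subgroupCount_pi_int]
  field_simp
  rw [← factorial_eq]
  ring

end CommutingTuples

end

/-- `ln H_{ℓ,n}(x) ~ (ℓ/(ℓ-1)) (x K_ℓ)^{1/ℓ} n^{(ℓ-1)/ℓ}` as `n → ∞`. -/
theorem logH_asymptotic (ℓ : ℕ) (hℓ : 2 ≤ ℓ) (x : ℝ) (hx : 0 < x) :
    Tendsto (fun n : ℕ =>
        Real.log (Hpoly ℓ n x) /
          ((ℓ : ℝ) / ((ℓ : ℝ) - 1) * (x * Kconst ℓ) ^ ((1 : ℝ) / (ℓ : ℝ)) *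
            (n : ℝ) ^ (((ℓ : ℝ) - 1) / (ℓ : ℝ))))
      atTop (nhds 1) := by
  have asymptotics : HasExpSumAsymptotics (fun m => x *
      (∏ i ∈ Finset.range ℓ, ArithmeticFunction.pow i : ArithmeticFunction ℕ) m)
      ℓ (x * Kconst ℓ) :=
    (hasExpSumAsymptotics_prod_pow (by lia)).const_mul hx.le
  exact asymptotics.tendsto_log_div (Nat.one_lt_cast.2 hℓ) (mul_pos hx (Kconst_pos ℓ))
    (fun n => Hpoly_pos ℓ n hx) (natCast_mul_Hpoly ℓ x)
end

section
/- Let ℓ ≥ 1 be an integer, let α_1,…,α_ℓ be real numbers, and let β > 0 satisfy β > α_i for every i ∈ {1,…,ℓ}. Then for every t > 0 the series defining Z^{[ℓ]}_{α_1,…,α_ℓ}(t) converges and satisfies Z^{[ℓ]}_{α_1,…,α_ℓ}(t) ≤ t^{−β} · ζ(β+1−α_1)⋯ζ(β+1−α_ℓ) · β^β e^{−β}, where ζ is the Riemann zeta function; in particular Z^{[ℓ]}_{α_1,…,α_ℓ}(t) < ∞. -/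
open Filter Topology Real MeasureTheory Asymptotics

/-! The function `x ↦ x ^ β * exp (-x)` is maximal at `x = β`. Taking `x = δ₁ ⋯ δ_ℓ t` replaces the
exponential by a constant times `(δ₁ ⋯ δ_ℓ t) ^ (-β)`, so the multiple series is dominated by one
whose terms factor over the indices, and that one sums to a product of zeta values. -/

theorem rpow_mul_exp_neg_le_s6 {x β : ℝ} (hx : 0 ≤ x) (hβ : 0 ≤ β) :
    x ^ β * exp (-x) ≤ β ^ β * exp (-β) := by
  rcases hβ.eq_or_lt with rfl | hβ
  · simpa using hx
  have div_le_exp : x / β ≤ exp (x / β - 1) := by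
    linarith [add_one_le_exp (x / β - 1)]
  calc x ^ β * exp (-x) = β ^ β * (x / β) ^ β * exp (-x) := by
        rw [← mul_rpow hβ.le (by positivity), mul_div_cancel₀ x hβ.ne']
    _ ≤ β ^ β * exp (x / β - 1) ^ β * exp (-x) := by gcongr
    _ = β ^ β * exp (-β) := by
        rw [← exp_mul, mul_assoc, ← exp_add]
        congr 2
        field_simp
        ring

theorem exp_neg_le_rpow_neg_mul {x β : ℝ} (hx : 0 < x) (hβ : 0 ≤ β) :
    exp (-x) ≤ x ^ (-β) * (β ^ β * exp (-β)) := by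
  rw [rpow_neg hx.le, ← div_eq_inv_mul, le_div_iff₀' (by positivity)]
  exact rpow_mul_exp_neg_le_s6 hx.le hβ

section ProductOfSums

variable {ι : Type*} [Fintype ι] {κ : ι → Type*} {f : ∀ i, κ i → ℝ} {a : ι → ℝ}

theorem sum_prod_le_prod_of_hasSum (hf : ∀ i k, 0 ≤ f i k) (ha : ∀ i, HasSum (f i) (a i))
    (S : Finset (∀ i, κ i)) : ∑ δ ∈ S, ∏ i, f i (δ i) ≤ ∏ i, a i := by
  classical
  have subset_box : S ⊆ Fintype.piFinset fun i => S.image (· i) := fun δ hδ =>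
    Fintype.mem_piFinset.2 fun i => Finset.mem_image_of_mem (· i) hδ
  calc ∑ δ ∈ S, ∏ i, f i (δ i)
      ≤ ∑ δ ∈ Fintype.piFinset fun i => S.image (· i), ∏ i, f i (δ i) :=
        Finset.sum_le_sum_of_subset_of_nonneg subset_box
          fun δ _ _ => Finset.prod_nonneg fun i _ => hf i (δ i)
    _ = ∏ i, ∑ k ∈ S.image (· i), f i k := (Finset.prod_univ_sum _ _).symm
    _ ≤ ∏ i, a i := Finset.prod_le_prod (fun i _ => Finset.sum_nonneg fun k _ => hf i k)
        fun i _ => sum_le_hasSum _ (fun k _ => hf i k) (ha i)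

theorem hasSum_prod_of_nonneg (hf : ∀ i k, 0 ≤ f i k) (ha : ∀ i, HasSum (f i) (a i)) :
    HasSum (fun δ : ∀ i, κ i => ∏ i, f i (δ i)) (∏ i, a i) := by
  classical
  refine hasSum_of_isLUB_of_nonneg _ (fun δ => Finset.prod_nonneg fun i _ => hf i (δ i))
    ⟨Set.forall_mem_range.2 (sum_prod_le_prod_of_hasSum hf ha), fun b hb => ?_⟩
  have tendsto_box_sum : Tendsto (fun S : ∀ i, Finset (κ i) => ∏ i, ∑ k ∈ S i, f i k)
      (Filter.pi fun _ => atTop) (𝓝 (∏ i, a i)) :=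
    tendsto_finsetProd _ fun i _ => (ha i).comp (tendsto_eval_pi _ i)
  refine le_of_tendsto' tendsto_box_sum fun S => ?_
  rw [Finset.prod_univ_sum]
  exact hb (Set.mem_range_self (Fintype.piFinset S))

end ProductOfSums

theorem hasSum_pnat_rpow_neg_zetaR {s : ℝ} (hs : 1 < s) :
    HasSum (fun d : ℕ+ => ((d : ℕ) : ℝ) ^ (-s)) (zetaR s) := by
  have summable_succ : Summable fun m : ℕ => 1 / ((m : ℝ) + 1) ^ s := by
    simpa using (summable_nat_add_iff 1).2 (summable_one_div_nat_rpow.2 hs)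
  refine (hasSum_pnat_iff_hasSum_succ (f := fun n : ℕ => (n : ℝ) ^ (-s))).2 ?_
  refine summable_succ.hasSum.congr_fun fun m => ?_
  rw [Nat.cast_succ, rpow_neg (by positivity), one_div]

theorem prod_rpow_mul_exp_neg_le {ι : Type*} [Fintype ι] {x : ι → ℝ} (hx : ∀ i, 0 < x i)
    (α : ι → ℝ) {β t : ℝ} (hβ : 0 ≤ β) (ht : 0 < t) :
    (∏ i, x i ^ (α i - 1)) * exp (-(∏ i, x i) * t) ≤
      t ^ (-β) * (∏ i, x i ^ (-(β + 1 - α i))) * (β ^ β * exp (-β)) := by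
  have prod_pos : 0 < ∏ i, x i := Finset.prod_pos fun i _ => hx i
  have prod_rpow_nonneg : 0 ≤ ∏ i, x i ^ (α i - 1) :=
    Finset.prod_nonneg fun i _ => rpow_nonneg (hx i).le _
  have split_exponent : ∏ i, x i ^ (-(β + 1 - α i)) =
      (∏ i, x i ^ (α i - 1)) * (∏ i, x i) ^ (-β) := by
    rw [← finsetProd_rpow _ _ fun i _ => (hx i).le, ← Finset.prod_mul_distrib]
    refine Finset.prod_congr rfl fun i _ => ?_
    rw [← rpow_add (hx i)]
    ring_nf
  calc (∏ i, x i ^ (α i - 1)) * exp (-(∏ i, x i) * t)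
      ≤ (∏ i, x i ^ (α i - 1)) * (((∏ i, x i) * t) ^ (-β) * (β ^ β * exp (-β))) := by
        rw [neg_mul]
        gcongr
        exact exp_neg_le_rpow_neg_mul (mul_pos prod_pos ht) hβ
    _ = t ^ (-β) * (∏ i, x i ^ (-(β + 1 - α i))) * (β ^ β * exp (-β)) := by
        rw [split_exponent, mul_rpow prod_pos.le ht.le]
        ring

/-- basic bound. For real `α_i < β`, `β > 0`, `t > 0`, the series defining
`Z^{[ℓ]}_{α}(t)` converges, and is at most `t^{-β} ζ(β+1-α_1)⋯ζ(β+1-α_ℓ) β^β e^{-β}`. -/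
theorem Zr_basic_bound (ℓ : ℕ) (hℓ : 1 ≤ ℓ) (α : Fin ℓ → ℝ) (β : ℝ)
    (hβ : 0 < β) (hβα : ∀ i, α i < β) (t : ℝ) (ht : 0 < t) :
    Summable (fun δ : Fin ℓ → ℕ+ =>
      (∏ i, ((δ i : ℕ) : ℝ) ^ (α i - 1)) * Real.exp (-(∏ i, ((δ i : ℕ) : ℝ)) * t)) ∧
    Zr ℓ α t ≤
      t ^ (-β) * (∏ i, zetaR (β + 1 - α i)) * (β ^ β * Real.exp (-β)) := by
  have term_le (δ : Fin ℓ → ℕ+) := prod_rpow_mul_exp_neg_le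
    (fun i => (Nat.cast_pos.2 (δ i).pos : (0 : ℝ) < (δ i : ℕ))) α hβ.le ht
  have hasSum_zeta (i : Fin ℓ) :
      HasSum (fun d : ℕ+ => ((d : ℕ) : ℝ) ^ (-(β + 1 - α i))) (zetaR (β + 1 - α i)) :=
    hasSum_pnat_rpow_neg_zetaR (by linarith [hβα i])
  have hasSum_majorant : HasSum
      (fun δ : Fin ℓ → ℕ+ =>
        t ^ (-β) * (∏ i, ((δ i : ℕ) : ℝ) ^ (-(β + 1 - α i))) * (β ^ β * exp (-β)))
      (t ^ (-β) * (∏ i, zetaR (β + 1 - α i)) * (β ^ β * exp (-β))) :=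
    ((hasSum_prod_of_nonneg (fun i d => by positivity) hasSum_zeta).mul_left _).mul_right _
  have summable_Z := hasSum_majorant.summable.of_nonneg_of_le (fun δ => by positivity) term_le
  exact ⟨summable_Z, hasSum_le term_le summable_Z.hasSum hasSum_majorant⟩
end

section
/- Let ℓ ≥ 1 be an integer, let α_1,…,α_ℓ be complex numbers, and let β be a real number with β > max(0, Re α_1, …, Re α_ℓ). Then there exist constants c_1, c_2 > 0 such that for all t > 0, |Z^{[ℓ]}_{α_1,…,α_ℓ}(t)| ≤ c_1 · t^{−β} · e^{−c_2 t}. -/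
open Filter Topology Real MeasureTheory Asymptotics

/-!
Split `e^{-Pt} = e^{-(1-c)Pt} e^{-cPt}` with `P = δ_1⋯δ_ℓ` and `0 < c < 1`. The first factor is
`O((Pt)^{-β})` and, as `P ≥ 1`, the second is at most `e^{-ct}`. What remains is the sum over `δ` of
`∏ δ_i^{Re α_i - 1 - β}`, a product of `ℓ` convergent zeta series.
-/

lemma exp_neg_mul_le_rpow_neg {r x p : ℝ} (hr : 0 < r) (hx : 0 < x) (hp : 0 ≤ p) :
    Real.exp (-(r * x)) ≤ (p / r) ^ p * x ^ (-p) := by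
  have rpow_le : x ^ p ≤ (p / r) ^ p * Real.exp (r * x) := by
    simpa only [abs_of_pos hr, abs_of_pos hx] using
      ProbabilityTheory.rpow_abs_le_mul_exp_abs x hp hr.ne'
  rw [Real.exp_neg, Real.rpow_neg hx.le, ← div_eq_mul_inv, inv_eq_one_div,
    div_le_div_iff₀ (Real.exp_pos _) (Real.rpow_pos_of_pos hx p), one_mul]
  exact rpow_le

lemma exp_neg_mul_le_rpow_neg_mul_exp {c β P t : ℝ} (hc0 : 0 ≤ c) (hc1 : c < 1) (hβ : 0 ≤ β)
    (hP : 1 ≤ P) (ht : 0 < t) :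
    Real.exp (-(P * t)) ≤ (β / (1 - c)) ^ β * (P * t) ^ (-β) * Real.exp (-c * t) := by
  have P_pos : 0 < P := one_pos.trans_le hP
  calc Real.exp (-(P * t)) = Real.exp (-((1 - c) * (P * t))) * Real.exp (-c * (P * t)) := by
        rw [← Real.exp_add]; ring_nf
    _ ≤ (β / (1 - c)) ^ β * (P * t) ^ (-β) * Real.exp (-c * t) := by
        gcongr ?_ * Real.exp ?_
        · exact exp_neg_mul_le_rpow_neg (sub_pos.2 hc1) (mul_pos P_pos ht) hβ
        · exact mul_le_mul_of_nonpos_left (le_mul_of_one_le_left ht.le hP) (neg_nonpos.2 hc0)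

section MultiIndex

variable {ι : Type*} [Fintype ι]

lemma summable_prod_pi_of_nonneg {κ : ι → Type*} {f : ∀ i, κ i → ℝ} (f_nonneg : ∀ i k, 0 ≤ f i k)
    (hf : ∀ i, Summable (f i)) : Summable fun k : ∀ i, κ i ↦ ∏ i, f i (k i) := by
  classical
  refine summable_of_sum_le (fun k ↦ Finset.prod_nonneg fun i _ ↦ f_nonneg i (k i))
    (c := ∏ i, ∑' k, f i k) fun s ↦ ?_
  have s_subset_box : s ⊆ Fintype.piFinset fun i ↦ s.image (· i) := fun k hk ↦
    Fintype.mem_piFinset.2 fun i ↦ Finset.mem_image_of_mem (· i) hk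
  calc ∑ k ∈ s, ∏ i, f i (k i)
      ≤ ∑ k ∈ Fintype.piFinset fun i ↦ s.image (· i), ∏ i, f i (k i) :=
        Finset.sum_le_sum_of_subset_of_nonneg s_subset_box fun k _ _ ↦
          Finset.prod_nonneg fun i _ ↦ f_nonneg i (k i)
    _ = ∏ i, ∑ k ∈ s.image (· i), f i k := (Finset.prod_univ_sum _ _).symm
    _ ≤ ∏ i, ∑' k, f i k :=
        Finset.prod_le_prod (fun i _ ↦ Finset.sum_nonneg fun k _ ↦ f_nonneg i k) fun i _ ↦
          (hf i).sum_le_tsum _ fun k _ ↦ f_nonneg i k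

lemma summable_prod_pnat_rpow {a : ι → ℝ} (ha : ∀ i, a i < -1) :
    Summable fun δ : ι → ℕ+ ↦ ∏ i, (δ i : ℝ) ^ a i :=
  summable_prod_pi_of_nonneg (f := fun i (k : ℕ+) ↦ (k : ℝ) ^ a i) (fun _ _ ↦ by positivity)
    fun i ↦ (Real.summable_nat_rpow.2 (ha i)).comp_injective PNat.coe_injective

lemma tsum_prod_pnat_rpow_pos {a : ι → ℝ} (ha : ∀ i, a i < -1) :
    0 < ∑' δ : ι → ℕ+, ∏ i, (δ i : ℝ) ^ a i :=
  (summable_prod_pnat_rpow ha).tsum_pos (fun _ ↦ by positivity) 1 (by simp)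

lemma norm_prod_pnat_cpow (δ : ι → ℕ+) (s : ι → ℂ) :
    ‖∏ i, ((δ i : ℕ) : ℂ) ^ s i‖ = ∏ i, (δ i : ℝ) ^ (s i).re := by
  simp only [norm_prod, Complex.norm_natCast_cpow_of_pos (δ _).pos]

lemma prod_rpow_sub_const {x : ι → ℝ} (hx : ∀ i, 0 < x i) (a : ι → ℝ) (b : ℝ) :
    ∏ i, x i ^ (a i - b) = (∏ i, x i ^ a i) * (∏ i, x i) ^ (-b) := by
  rw [← Real.finsetProd_rpow _ _ fun i _ ↦ (hx i).le, ← Finset.prod_mul_distrib]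
  exact Finset.prod_congr rfl fun i _ ↦ by rw [← Real.rpow_add (hx i), sub_eq_add_neg]

lemma norm_Zc_term_le (α : ι → ℂ) {c β t : ℝ} (hc0 : 0 ≤ c) (hc1 : c < 1) (hβ : 0 ≤ β)
    (ht : 0 < t) (δ : ι → ℕ+) :
    ‖(∏ i, ((δ i : ℕ) : ℂ) ^ (α i - 1)) *
        Complex.exp (-(((∏ i, ((δ i : ℕ) : ℝ)) * t : ℝ) : ℂ))‖ ≤
      (β / (1 - c)) ^ β * t ^ (-β) * Real.exp (-c * t) *
        ∏ i, (δ i : ℝ) ^ ((α i).re - 1 - β) := by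
  have δ_pos (i) : (0 : ℝ) < δ i := mod_cast (δ i).pos
  have prod_ge_one : (1 : ℝ) ≤ ∏ i, (δ i : ℝ) :=
    Finset.one_le_prod fun i _ ↦ Nat.one_le_cast.2 (δ i).pos
  calc ‖(∏ i, ((δ i : ℕ) : ℂ) ^ (α i - 1)) *
          Complex.exp (-(((∏ i, ((δ i : ℕ) : ℝ)) * t : ℝ) : ℂ))‖
      = (∏ i, (δ i : ℝ) ^ ((α i).re - 1)) * Real.exp (-((∏ i, (δ i : ℝ)) * t)) := by
        rw [norm_mul, norm_prod_pnat_cpow, ← Complex.ofReal_neg, Complex.norm_exp_ofReal]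
        simp only [Complex.sub_re, Complex.one_re]
    _ ≤ (∏ i, (δ i : ℝ) ^ ((α i).re - 1)) *
          ((β / (1 - c)) ^ β * ((∏ i, (δ i : ℝ)) * t) ^ (-β) * Real.exp (-c * t)) := by
        gcongr
        exact exp_neg_mul_le_rpow_neg_mul_exp hc0 hc1 hβ prod_ge_one ht
    _ = (β / (1 - c)) ^ β * t ^ (-β) * Real.exp (-c * t) *
          ∏ i, (δ i : ℝ) ^ ((α i).re - 1 - β) := by
        rw [prod_rpow_sub_const δ_pos _ β, Real.mul_rpow (by positivity) ht.le]
        ring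

end MultiIndex

theorem norm_Zc_le {ℓ : ℕ} {α : Fin ℓ → ℂ} {c β t : ℝ} (hc0 : 0 ≤ c) (hc1 : c < 1) (hβ0 : 0 ≤ β)
    (hβα : ∀ i, (α i).re < β) (ht : 0 < t) :
    ‖Zc ℓ α t‖ ≤ (β / (1 - c)) ^ β * (∑' δ : Fin ℓ → ℕ+, ∏ i, (δ i : ℝ) ^ ((α i).re - 1 - β)) *
      t ^ (-β) * Real.exp (-c * t) := by
  have majorant_summable := summable_prod_pnat_rpow (a := fun i ↦ (α i).re - 1 - β)
    fun i ↦ by linarith [hβα i]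
  refine (tsum_of_norm_bounded (majorant_summable.hasSum.mul_left _)
    (norm_Zc_term_le α hc0 hc1 hβ0 ht)).trans_eq ?_
  ring

/-- for `β > max(0, Re α_1, …, Re α_ℓ)` there are `c₁, c₂ > 0` with
`|Z^{[ℓ]}_{α}(t)| ≤ c₁ t^{-β} e^{-c₂ t}` for all `t > 0`. -/
theorem Zc_decay_bound (ℓ : ℕ) (hℓ : 1 ≤ ℓ) (α : Fin ℓ → ℂ) (β : ℝ)
    (hβ0 : 0 < β) (hβα : ∀ i, (α i).re < β) :
    ∃ c₁ > (0 : ℝ), ∃ c₂ > (0 : ℝ), ∀ t : ℝ, 0 < t →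
      ‖Zc ℓ α t‖ ≤ c₁ * t ^ (-β) * Real.exp (-c₂ * t) := by
  have majorant_pos : 0 < ∑' δ : Fin ℓ → ℕ+, ∏ i, (δ i : ℝ) ^ ((α i).re - 1 - β) :=
    tsum_prod_pnat_rpow_pos fun i ↦ by linarith [hβα i]
  have rpow_factor_pos : 0 < (β / (1 - 1 / 2)) ^ β :=
    Real.rpow_pos_of_pos (div_pos hβ0 (by norm_num)) β
  exact ⟨_, mul_pos rpow_factor_pos majorant_pos, 1 / 2, by norm_num, fun t ht ↦
    norm_Zc_le (by norm_num) (by norm_num) hβ0.le hβα ht⟩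
end

section
/- Let f : (0,∞) → ℂ be a differentiable function and suppose there exist γ, c_1, c_2 > 0 such that for all t > 0, max(|f(t)|, t·|f'(t)|) ≤ c_1 · t^{γ−1} · e^{−c_2 t}. Then f is integrable on (0,∞), the series Σ_{δ=1}^{∞} f(δt) converges absolutely for all t > 0, and lim_{t → 0⁺} t · Σ_{δ=1}^{∞} f(δt) = ∫_{0}^{∞} f(u) du. -/
open Filter Topology Real MeasureTheory Asymptotics

/-!
For `t > 0` the sum `t ∑_{δ ≥ 1} f (δ t)` is the integral over `(0, ∞)` of the step function
`u ↦ f (⌈u / t⌉ t)`, and `⌈u / t⌉ t → u` as `t → 0⁺`. If `‖f‖` is bounded by an integrable antitone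
function `g`, then, since `⌈u / t⌉ t ≥ u`, the same `g` dominates all these step functions at once,
and dominated convergence gives the limit. The bound `c₁ t ^ (γ - 1) e ^ (-c₂ t)` need not be
antitone, but half of the exponential absorbs the positive part of the exponent `γ - 1`.
-/

/-- The right endpoint `⌈u / t⌉ t` of the cell `((δ - 1) t, δ t]` of the grid of mesh `t` that
contains `u`, meant for `0 < t` and `0 < u`. -/
noncomputable def gridCeil (t u : ℝ) : ℝ := ⌈u / t⌉₊ * t

section GridCeil

variable {t u : ℝ}

lemma le_gridCeil (ht : 0 < t) : u ≤ gridCeil t u :=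
  (div_le_iff₀ ht).1 (Nat.le_ceil _)

lemma gridCeil_le_add (ht : 0 < t) (hu : 0 ≤ u) : gridCeil t u ≤ u + t := by
  calc gridCeil t u ≤ (u / t + 1) * t :=
        mul_le_mul_of_nonneg_right (Nat.ceil_lt_add_one (div_nonneg hu ht.le)).le ht.le
    _ = u + t := by field_simp

lemma tendsto_gridCeil (hu : 0 ≤ u) : Tendsto (fun t => gridCeil t u) (𝓝[>] 0) (𝓝 u) := by
  have h_add : Tendsto (fun t : ℝ => u + t) (𝓝[>] 0) (𝓝 u) :=
    Tendsto.mono_left (Continuous.tendsto' (by fun_prop) 0 u (add_zero u)) nhdsWithin_le_nhds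
  refine tendsto_of_tendsto_of_tendsto_of_le_of_le' tendsto_const_nhds h_add ?_ ?_
  · filter_upwards [self_mem_nhdsWithin] with t ht using le_gridCeil ht
  · filter_upwards [self_mem_nhdsWithin] with t ht using gridCeil_le_add ht hu

lemma preimage_natCeil_div_singleton (ht : 0 < t) (δ : ℕ+) :
    (fun u : ℝ => ⌈u / t⌉₊) ⁻¹' {(δ : ℕ)} = Set.Ioc (((δ : ℕ) - 1) * t) ((δ : ℕ) * t) := by
  ext u
  rw [Set.mem_preimage, Set.mem_singleton_iff, Nat.ceil_eq_iff δ.ne_zero, Set.mem_Ioc,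
    lt_div_iff₀ ht, div_le_iff₀ ht, Nat.cast_pred δ.pos]

lemma iUnion_preimage_natCeil_div (ht : 0 < t) :
    ⋃ δ : ℕ+, (fun u : ℝ => ⌈u / t⌉₊) ⁻¹' {(δ : ℕ)} = Set.Ioi 0 := by
  ext u
  rw [Set.mem_Ioi, ← div_pos_iff_of_pos_right ht, ← Nat.ceil_pos, Set.mem_iUnion]
  exact ⟨fun ⟨δ, hδ⟩ => δ.pos.trans_eq hδ.symm, fun h => ⟨⟨_, h⟩, rfl⟩⟩

lemma measurable_natCeil_div (t : ℝ) : Measurable fun u : ℝ => ⌈u / t⌉₊ :=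
  Nat.measurable_ceil.comp (measurable_id.div_const t)

lemma stronglyMeasurable_comp_gridCeil {E : Type*} [TopologicalSpace E] (f : ℝ → E) (t : ℝ) :
    StronglyMeasurable fun u => f (gridCeil t u) :=
  (StronglyMeasurable.of_discrete (f := fun n : ℕ => f (n * t))).comp_measurable
    (measurable_natCeil_div t)

lemma tendsto_comp_gridCeil_ae {E : Type*} [TopologicalSpace E] {f : ℝ → E} {μ : Measure ℝ}
    (hf : ∀ᵐ u ∂μ.restrict (Set.Ioi 0), ContinuousAt f u) :
    ∀ᵐ u ∂μ.restrict (Set.Ioi 0), Tendsto (fun t => f (gridCeil t u)) (𝓝[>] 0) (𝓝 (f u)) := by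
  filter_upwards [hf, ae_restrict_mem measurableSet_Ioi] with u hfu hu
  exact hfu.tendsto.comp (tendsto_gridCeil (le_of_lt hu))

lemma aestronglyMeasurable_restrict_Ioi_of_ae_continuousAt {E : Type*} [TopologicalSpace E]
    [TopologicalSpace.PseudoMetrizableSpace E] {f : ℝ → E} {μ : Measure ℝ}
    (hf : ∀ᵐ u ∂μ.restrict (Set.Ioi 0), ContinuousAt f u) :
    AEStronglyMeasurable f (μ.restrict (Set.Ioi 0)) :=
  aestronglyMeasurable_of_tendsto_ae (𝓝[>] (0 : ℝ))
    (fun t => (stronglyMeasurable_comp_gridCeil f t).aestronglyMeasurable)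
    (tendsto_comp_gridCeil_ae hf)

lemma hasSum_integral_comp_gridCeil {E : Type*} [NormedAddCommGroup E] [NormedSpace ℝ E]
    [CompleteSpace E] {f : ℝ → E} (ht : 0 < t)
    (hf : IntegrableOn (fun u => f (gridCeil t u)) (Set.Ioi 0)) :
    HasSum (fun δ : ℕ+ => t • f ((δ : ℕ) * t)) (∫ u in Set.Ioi 0, f (gridCeil t u)) := by
  have h_meas (δ : ℕ+) : MeasurableSet ((fun u : ℝ => ⌈u / t⌉₊) ⁻¹' {(δ : ℕ)}) :=
    measurable_natCeil_div t (measurableSet_singleton _)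
  have h_disj : Pairwise (Function.onFun Disjoint
      fun δ : ℕ+ => (fun u : ℝ => ⌈u / t⌉₊) ⁻¹' {(δ : ℕ)}) := fun δ ε hne =>
    Disjoint.preimage _ (Set.disjoint_singleton.2 (PNat.coe_injective.ne hne))
  have h_cell (δ : ℕ+) :
      ∫ u in (fun u : ℝ => ⌈u / t⌉₊) ⁻¹' {(δ : ℕ)}, f (gridCeil t u) = t • f ((δ : ℕ) * t) := by
    calc ∫ u in (fun u : ℝ => ⌈u / t⌉₊) ⁻¹' {(δ : ℕ)}, f (gridCeil t u)
        = ∫ _ in (fun u : ℝ => ⌈u / t⌉₊) ⁻¹' {(δ : ℕ)}, f ((δ : ℕ) * t) :=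
          setIntegral_congr_fun (h_meas δ) fun u (hu : ⌈u / t⌉₊ = δ) => by
            simp only [gridCeil, hu]
      _ = ((δ : ℕ) * t - ((δ : ℕ) - 1) * t) • f ((δ : ℕ) * t) := by
          rw [preimage_natCeil_div_singleton ht, setIntegral_const,
            Real.volume_real_Ioc_of_le (by linarith)]
      _ = t • f ((δ : ℕ) * t) := by ring_nf
  have h_sum := hasSum_integral_iUnion h_meas h_disj (by rwa [iUnion_preimage_natCeil_div ht])
  rw [iUnion_preimage_natCeil_div ht] at h_sum
  exact h_sum.congr_fun fun δ => (h_cell δ).symm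

end GridCeil

section AntitoneMajorant

variable {E : Type*} [NormedAddCommGroup E] {f : ℝ → E} {g : ℝ → ℝ} {t : ℝ}

lemma norm_comp_gridCeil_le (hg : AntitoneOn g (Set.Ioi 0)) (hfg : ∀ u, 0 < u → ‖f u‖ ≤ g u)
    {u : ℝ} (ht : 0 < t) (hu : 0 < u) : ‖f (gridCeil t u)‖ ≤ g u :=
  have hpos : 0 < gridCeil t u := hu.trans_le (le_gridCeil ht)
  (hfg _ hpos).trans (hg hu hpos (le_gridCeil ht))

lemma integrableOn_comp_gridCeil (hg : AntitoneOn g (Set.Ioi 0))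
    (hg_int : IntegrableOn g (Set.Ioi 0)) (hfg : ∀ u, 0 < u → ‖f u‖ ≤ g u) (ht : 0 < t) :
    IntegrableOn (fun u => f (gridCeil t u)) (Set.Ioi 0) :=
  hg_int.mono' (stronglyMeasurable_comp_gridCeil f t).aestronglyMeasurable <|
    ae_restrict_of_forall_mem measurableSet_Ioi fun _ hu => norm_comp_gridCeil_le hg hfg ht hu

lemma integrableOn_Ioi_of_ae_continuousAt_of_norm_le
    (hf : ∀ᵐ u ∂volume.restrict (Set.Ioi 0), ContinuousAt f u)
    (hg_int : IntegrableOn g (Set.Ioi 0)) (hfg : ∀ u, 0 < u → ‖f u‖ ≤ g u) :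
    IntegrableOn f (Set.Ioi 0) :=
  hg_int.mono' (aestronglyMeasurable_restrict_Ioi_of_ae_continuousAt hf) <|
    ae_restrict_of_forall_mem measurableSet_Ioi hfg

lemma summable_norm_of_norm_le_antitoneOn (hg : AntitoneOn g (Set.Ioi 0))
    (hg_int : IntegrableOn g (Set.Ioi 0)) (hfg : ∀ u, 0 < u → ‖f u‖ ≤ g u) (ht : 0 < t) :
    Summable fun δ : ℕ+ => ‖f ((δ : ℕ) * t)‖ := by
  have h := hasSum_integral_comp_gridCeil (f := fun u => ‖f u‖) ht
    (integrableOn_comp_gridCeil hg hg_int hfg ht).norm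
  exact (summable_mul_left_iff ht.ne').1 h.summable

variable [NormedSpace ℝ E]

lemma tendsto_integral_comp_gridCeil
    (hf : ∀ᵐ u ∂volume.restrict (Set.Ioi 0), ContinuousAt f u) (hg : AntitoneOn g (Set.Ioi 0))
    (hg_int : IntegrableOn g (Set.Ioi 0)) (hfg : ∀ u, 0 < u → ‖f u‖ ≤ g u) :
    Tendsto (fun t => ∫ u in Set.Ioi 0, f (gridCeil t u)) (𝓝[>] 0)
      (𝓝 (∫ u in Set.Ioi 0, f u)) := by
  refine tendsto_integral_filter_of_dominated_convergence g
    (Eventually.of_forall fun t => (stronglyMeasurable_comp_gridCeil f t).aestronglyMeasurable)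
    ?_ hg_int (tendsto_comp_gridCeil_ae hf)
  filter_upwards [self_mem_nhdsWithin] with t ht
  exact ae_restrict_of_forall_mem measurableSet_Ioi fun _ hu => norm_comp_gridCeil_le hg hfg ht hu

lemma tendsto_smul_tsum_of_norm_le_antitoneOn [CompleteSpace E]
    (hf : ∀ᵐ u ∂volume.restrict (Set.Ioi 0), ContinuousAt f u) (hg : AntitoneOn g (Set.Ioi 0))
    (hg_int : IntegrableOn g (Set.Ioi 0)) (hfg : ∀ u, 0 < u → ‖f u‖ ≤ g u) :
    Tendsto (fun t : ℝ => t • ∑' δ : ℕ+, f ((δ : ℕ) * t)) (𝓝[>] 0)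
      (𝓝 (∫ u in Set.Ioi 0, f u)) := by
  refine (tendsto_integral_comp_gridCeil hf hg hg_int hfg).congr' ?_
  filter_upwards [self_mem_nhdsWithin] with t ht
  rw [← (hasSum_integral_comp_gridCeil ht (integrableOn_comp_gridCeil hg hg_int hfg ht)).tsum_eq,
    tsum_const_smul'']

end AntitoneMajorant

section RpowMulExp

lemma antitoneOn_rpow_mul_exp_neg_mul {s b : ℝ} (hs : s ≤ 0) (hb : 0 ≤ b) :
    AntitoneOn (fun t : ℝ => t ^ s * exp (-b * t)) (Set.Ioi 0) := by
  intro x hx y _ hxy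
  have h_rpow : y ^ s ≤ x ^ s := rpow_le_rpow_of_nonpos hx hxy hs
  have h_exp : exp (-b * y) ≤ exp (-b * x) :=
    exp_le_exp.2 (mul_le_mul_of_nonpos_left hxy (neg_nonpos.2 hb))
  exact mul_le_mul h_rpow h_exp (exp_nonneg _) (rpow_nonneg (le_of_lt hx) s)

lemma integrableOn_rpow_mul_exp_neg_mul {s b : ℝ} (hs : -1 < s) (hb : 0 < b) :
    IntegrableOn (fun t : ℝ => t ^ s * exp (-b * t)) (Set.Ioi 0) := by
  simpa only [rpow_one] using integrableOn_rpow_mul_exp_neg_mul_rpow hs one_pos hb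

lemma rpow_mul_exp_neg_mul_le {s b t : ℝ} (hs : 0 ≤ s) (hb : 0 < b) (ht : 0 ≤ t) :
    t ^ s * exp (-b * t) ≤ (s / b) ^ s := by
  have h := ProbabilityTheory.rpow_abs_le_mul_exp_abs t hs hb.ne'
  rw [abs_of_nonneg ht, abs_of_pos hb] at h
  rwa [neg_mul, exp_neg, ← div_eq_mul_inv, div_le_iff₀ (exp_pos _)]

lemma exists_antitoneOn_integrableOn_rpow_mul_exp_le {s b : ℝ} (hs : -1 < s) (hb : 0 < b) :
    ∃ g : ℝ → ℝ, AntitoneOn g (Set.Ioi 0) ∧ IntegrableOn g (Set.Ioi 0) ∧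
      ∀ t, 0 < t → t ^ s * exp (-b * t) ≤ g t := by
  set C : ℝ := (max s 0 / (b / 2)) ^ max s 0
  have hC : 0 ≤ C := by positivity
  refine ⟨fun t => C * (t ^ min s 0 * exp (-(b / 2) * t)), fun x hx y hy hxy => ?_, ?_, ?_⟩
  · exact mul_le_mul_of_nonneg_left
      (antitoneOn_rpow_mul_exp_neg_mul (min_le_right s 0) (half_pos hb).le hx hy hxy) hC
  · exact (integrableOn_rpow_mul_exp_neg_mul (lt_min hs neg_one_lt_zero) (half_pos hb)).const_mul C
  · intro t ht
    have h_rpow : t ^ s = t ^ max s 0 * t ^ min s 0 := by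
      rw [← rpow_add ht, max_add_min, add_zero]
    have h_exp : exp (-b * t) = exp (-(b / 2) * t) * exp (-(b / 2) * t) := by
      rw [← exp_add]; ring_nf
    calc t ^ s * exp (-b * t)
        = (t ^ max s 0 * exp (-(b / 2) * t)) * (t ^ min s 0 * exp (-(b / 2) * t)) := by
          rw [h_rpow, h_exp]; ring
      _ ≤ C * (t ^ min s 0 * exp (-(b / 2) * t)) := by
          gcongr
          exact rpow_mul_exp_neg_mul_le (le_max_right s 0) (half_pos hb) ht.le

end RpowMulExp

theorem euler_maclaurin_limit_general {E : Type*} [NormedAddCommGroup E] [NormedSpace ℝ E]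
    [CompleteSpace E] {f : ℝ → E} {γ c₁ c₂ : ℝ}
    (hf : ∀ᵐ u ∂volume.restrict (Set.Ioi 0), ContinuousAt f u) (hγ : 0 < γ) (hc₂ : 0 < c₂)
    (hbound : ∀ t : ℝ, 0 < t → ‖f t‖ ≤ c₁ * t ^ (γ - 1) * exp (-c₂ * t)) :
    IntegrableOn f (Set.Ioi 0) ∧
    (∀ t : ℝ, 0 < t → Summable (fun δ : ℕ+ => ‖f ((δ : ℕ) * t)‖)) ∧
    Tendsto (fun t : ℝ => t • ∑' δ : ℕ+, f ((δ : ℕ) * t)) (𝓝[>] 0)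
      (𝓝 (∫ u in Set.Ioi 0, f u)) := by
  have hc₁ : 0 ≤ c₁ := by
    have h := (norm_nonneg _).trans (hbound 1 one_pos)
    rw [one_rpow, mul_one] at h
    exact nonneg_of_mul_nonneg_left h (exp_pos _)
  obtain ⟨g, hg, hg_int, h_le⟩ :=
    exists_antitoneOn_integrableOn_rpow_mul_exp_le (by linarith : -1 < γ - 1) hc₂
  have hg' : AntitoneOn (fun u => c₁ * g u) (Set.Ioi 0) := fun x hx y hy hxy =>
    mul_le_mul_of_nonneg_left (hg hx hy hxy) hc₁
  have hg_int' : IntegrableOn (fun u => c₁ * g u) (Set.Ioi 0) := hg_int.const_mul c₁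
  have hfg (u : ℝ) (hu : 0 < u) : ‖f u‖ ≤ c₁ * g u :=
    (hbound u hu).trans <| (mul_assoc c₁ _ _).trans_le <|
      mul_le_mul_of_nonneg_left (h_le u hu) hc₁
  exact ⟨integrableOn_Ioi_of_ae_continuousAt_of_norm_le hf hg_int' hfg,
    fun _ ht => summable_norm_of_norm_le_antitoneOn hg' hg_int' hfg ht,
    tendsto_smul_tsum_of_norm_le_antitoneOn hf hg' hg_int' hfg⟩

/-- Euler–Maclaurin-type lemma. If `f : (0,∞) → ℂ` is differentiable and
`max(|f(t)|, t|f'(t)|) ≤ c₁ t^{γ-1} e^{-c₂ t}` for all `t > 0`, with `γ, c₁, c₂ > 0`, then `f`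
is integrable on `(0,∞)`, `∑_{δ≥1} f(δt)` converges absolutely for all `t > 0`, and
`t ∑_{δ≥1} f(δt) → ∫_0^∞ f(u) du` as `t → 0⁺`. -/
theorem euler_maclaurin_limit (f f' : ℝ → ℂ)
    (hderiv : ∀ t ∈ Set.Ioi (0 : ℝ), HasDerivAt f (f' t) t)
    (γ c₁ c₂ : ℝ) (hγ : 0 < γ) (hc₁ : 0 < c₁) (hc₂ : 0 < c₂)
    (hbound : ∀ t : ℝ, 0 < t →
      max ‖f t‖ (t * ‖f' t‖) ≤ c₁ * t ^ (γ - 1) * Real.exp (-c₂ * t)) :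
    IntegrableOn f (Set.Ioi 0) ∧
    (∀ t : ℝ, 0 < t → Summable (fun δ : ℕ+ => ‖f ((δ : ℕ) * t)‖)) ∧
    Tendsto (fun t : ℝ => (t : ℂ) * ∑' δ : ℕ+, f ((δ : ℕ) * t))
      (nhdsWithin 0 (Set.Ioi 0)) (nhds (∫ u in Set.Ioi (0 : ℝ), f u)) := by
  simpa only [Complex.real_smul] using euler_maclaurin_limit_general
    (ae_restrict_of_forall_mem measurableSet_Ioi fun t ht => (hderiv t ht).continuousAt) hγ hc₂
    fun t ht => (le_max_left _ _).trans (hbound t ht)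
end

section
/- Let ℓ ≥ 1 be an integer and let α_1,…,α_ℓ be complex numbers with Re α_1 > Re α_2 ≥ ⋯ ≥ Re α_ℓ and Re α_1 > 0. Then, as t → 0⁺, Z^{[ℓ]}_{α_1,…,α_ℓ}(t) ~ Γ(α_1) · ζ(α_1+1−α_2) · ζ(α_1+1−α_3) ⋯ ζ(α_1+1−α_ℓ) · t^{−α_1}, where Γ is the Euler gamma function and ζ the Riemann zeta function (for ℓ = 1 the only hypothesis is Re α_1 > 0 and there are no zeta factors); here ~ means the ratio of the two sides tends to 1. -/
open Filter Topology Real MeasureTheory Asymptotics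

/-!
Let `a = α k` have the largest real part and sum first over `δ_k`. Multiplied by `t ^ a`, this inner
sum is, up to the factor `∏_{i ≠ k} δ_i ^ (-(a + 1 - α i))`, the Riemann sum of mesh
`t * ∏_{i ≠ k} δ_i` of the integrand of `Γ(a)` on `(0, ∞)`. These Riemann sums are bounded
uniformly in the mesh and converge to `Γ(a)` as the mesh tends to `0`, because the integrand has an
integrable antitone majorant. Since the factors are absolutely summable, with sum
`∏_{i ≠ k} ζ(a + 1 - α i)`, dominated convergence finishes the proof.
-/

section RiemannSum

variable {E : Type*} [NormedAddCommGroup E] {f : ℝ → E} {B : ℝ → ℝ} {t x : ℝ}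

theorem setOf_natCeil_div_eq (ht : 0 < t) (n : ℕ+) :
    {x : ℝ | ⌈x / t⌉₊ = n} = Set.Ioc (t * ((n : ℝ) - 1)) (t * n) := by
  ext x
  rw [Set.mem_ofPred_eq, Nat.ceil_eq_iff n.ne_zero, Nat.cast_pred n.pos, lt_div_iff₀' ht,
    div_le_iff₀' ht, Set.mem_Ioc]

theorem iUnion_setOf_natCeil_div_eq (ht : 0 < t) :
    ⋃ n : ℕ+, {x : ℝ | ⌈x / t⌉₊ = n} = Set.Ioi 0 := by
  ext x
  rw [Set.mem_iUnion, Set.mem_Ioi, ← div_pos_iff_of_pos_right ht, ← Nat.ceil_pos]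
  exact ⟨fun ⟨n, hn⟩ => hn ▸ n.pos, fun hx => ⟨⟨_, hx⟩, rfl⟩⟩

theorem tendsto_mul_natCeil_div (hx : 0 ≤ x) :
    Tendsto (fun t : ℝ => t * ⌈x / t⌉₊) (𝓝[>] 0) (𝓝 x) := by
  refine ((tendsto_nat_ceil_mul_div_atTop hx).comp tendsto_inv_nhdsGT_zero).congr fun t => ?_
  rw [Function.comp_apply, div_inv_eq_mul, ← div_eq_mul_inv, mul_comm]

theorem norm_comp_natCeil_le (hB : AntitoneOn B (Set.Ioi 0)) (hfB : ∀ y > 0, ‖f y‖ ≤ B y)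
    (ht : 0 < t) (hx : 0 < x) : ‖f (t * ⌈x / t⌉₊)‖ ≤ B x := by
  have hle : x ≤ t * ⌈x / t⌉₊ := (div_le_iff₀' ht).1 (Nat.le_ceil _)
  have hpos : 0 < t * ⌈x / t⌉₊ := hx.trans_le hle
  exact (hfB _ hpos).trans (hB hx hpos hle)

theorem stronglyMeasurable_comp_natCeil {X : Type*} [TopologicalSpace X] (f : ℝ → X) (t : ℝ) :
    StronglyMeasurable fun x : ℝ => f (t * ⌈x / t⌉₊) :=
  (StronglyMeasurable.of_discrete (f := fun n : ℕ => f (t * n))).comp_measurable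
    (Nat.measurable_ceil.comp (measurable_id.div_const t))

theorem integrableOn_comp_natCeil (hB : IntegrableOn B (Set.Ioi 0))
    (hBanti : AntitoneOn B (Set.Ioi 0)) (hfB : ∀ y > 0, ‖f y‖ ≤ B y) (ht : 0 < t) :
    IntegrableOn (fun x : ℝ => f (t * ⌈x / t⌉₊)) (Set.Ioi 0) := by
  refine Integrable.mono' hB (stronglyMeasurable_comp_natCeil f t).aestronglyMeasurable ?_
  filter_upwards [ae_restrict_mem measurableSet_Ioi] with x hx
  exact norm_comp_natCeil_le hBanti hfB ht hx

variable [NormedSpace ℝ E]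

theorem hasSum_smul_integral_comp_natCeil [CompleteSpace E] (ht : 0 < t)
    (hint : IntegrableOn (fun x : ℝ => f (t * ⌈x / t⌉₊)) (Set.Ioi 0)) :
    HasSum (fun n : ℕ+ => t • f (t * n)) (∫ x in Set.Ioi 0, f (t * ⌈x / t⌉₊)) := by
  have hmeas (n : ℕ+) : MeasurableSet {x : ℝ | ⌈x / t⌉₊ = n} := by
    rw [setOf_natCeil_div_eq ht]
    exact measurableSet_Ioc
  have hdisj : Pairwise (Function.onFun Disjoint fun n : ℕ+ => {x : ℝ | ⌈x / t⌉₊ = n}) :=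
    fun m n hmn => Set.disjoint_left.2 fun x hm hn => hmn (PNat.eq (hm.symm.trans hn))
  have hcell (n : ℕ+) : ∫ x in {x : ℝ | ⌈x / t⌉₊ = n}, f (t * ⌈x / t⌉₊) = t • f (t * n) := by
    have hconst : Set.EqOn (fun x : ℝ => f (t * ⌈x / t⌉₊)) (fun _ => f (t * n))
        {x : ℝ | ⌈x / t⌉₊ = n} := fun x hx => congrArg (fun m : ℕ => f (t * m)) hx
    rw [setIntegral_congr_fun (hmeas n) hconst, setIntegral_const, setOf_natCeil_div_eq ht,
      Real.volume_real_Ioc_of_le (by nlinarith)]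
    congr 1
    ring
  rw [← iUnion_setOf_natCeil_div_eq ht] at hint ⊢
  simpa only [hcell] using hasSum_integral_iUnion hmeas hdisj hint

theorem hasSum_norm_smul_integral_comp_natCeil (ht : 0 < t)
    (hint : IntegrableOn (fun x : ℝ => f (t * ⌈x / t⌉₊)) (Set.Ioi 0)) :
    HasSum (fun n : ℕ+ => ‖t • f (t * n)‖) (∫ x in Set.Ioi 0, ‖f (t * ⌈x / t⌉₊)‖) := by
  simpa only [norm_smul, Real.norm_of_nonneg ht.le, smul_eq_mul] using
    hasSum_smul_integral_comp_natCeil (f := fun y => ‖f y‖) ht hint.norm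

theorem summable_norm_smul_of_antitoneOn_bound (hB : IntegrableOn B (Set.Ioi 0))
    (hBanti : AntitoneOn B (Set.Ioi 0)) (hfB : ∀ y > 0, ‖f y‖ ≤ B y) (ht : 0 < t) :
    Summable fun n : ℕ+ => ‖t • f (t * n)‖ :=
  (hasSum_norm_smul_integral_comp_natCeil ht
    (integrableOn_comp_natCeil hB hBanti hfB ht)).summable

theorem tsum_norm_smul_le_integral (hB : IntegrableOn B (Set.Ioi 0))
    (hBanti : AntitoneOn B (Set.Ioi 0)) (hfB : ∀ y > 0, ‖f y‖ ≤ B y) (ht : 0 < t) :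
    ∑' n : ℕ+, ‖t • f (t * n)‖ ≤ ∫ x in Set.Ioi 0, B x := by
  have hint := integrableOn_comp_natCeil hB hBanti hfB ht
  rw [(hasSum_norm_smul_integral_comp_natCeil ht hint).tsum_eq]
  exact setIntegral_mono_on hint.norm hB measurableSet_Ioi fun x hx =>
    norm_comp_natCeil_le hBanti hfB ht hx

theorem tendsto_tsum_smul_integral_Ioi [CompleteSpace E] (hB : IntegrableOn B (Set.Ioi 0))
    (hBanti : AntitoneOn B (Set.Ioi 0)) (hfB : ∀ y > 0, ‖f y‖ ≤ B y)
    (hf : ContinuousOn f (Set.Ioi 0)) :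
    Tendsto (fun t : ℝ => ∑' n : ℕ+, t • f (t * n)) (𝓝[>] 0) (𝓝 (∫ x in Set.Ioi 0, f x)) := by
  have hlim : Tendsto (fun t : ℝ => ∫ x in Set.Ioi 0, f (t * ⌈x / t⌉₊)) (𝓝[>] 0)
      (𝓝 (∫ x in Set.Ioi 0, f x)) := by
    refine tendsto_integral_filter_of_dominated_convergence B
      (.of_forall fun t => (stronglyMeasurable_comp_natCeil f t).aestronglyMeasurable) ?_ hB ?_
    · filter_upwards [self_mem_nhdsWithin] with t ht
      filter_upwards [ae_restrict_mem measurableSet_Ioi] with x hx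
      exact norm_comp_natCeil_le hBanti hfB ht hx
    · filter_upwards [ae_restrict_mem measurableSet_Ioi] with x hx
      exact (hf.continuousAt (Ioi_mem_nhds hx)).tendsto.comp (tendsto_mul_natCeil_div (le_of_lt hx))
  refine hlim.congr' ?_
  filter_upwards [self_mem_nhdsWithin] with t ht
  exact (hasSum_smul_integral_comp_natCeil ht
    (integrableOn_comp_natCeil hB hBanti hfB ht)).tsum_eq.symm

end RiemannSum

section GammaIntegrand

/-- The integrand `e ^ (-y) * y ^ (a - 1)` of Euler's integral for `Γ(a)`, in the form used by
`Complex.GammaIntegral`. -/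
noncomputable def gammaIntegrand (a : ℂ) (y : ℝ) : ℂ :=
  (Real.exp (-y) : ℂ) * (y : ℂ) ^ (a - 1)

/-- An antitone majorant of `e ^ (-y) * y ^ (σ - 1)` on `(0, ∞)`, integrable for `0 < σ`: the part
`y ^ (σ - min σ 1)` of the power, increasing when `1 < σ`, is absorbed by `e ^ (y / 2)` at the cost
of a constant. -/
noncomputable def gammaMajorant (σ y : ℝ) : ℝ :=
  ((σ - min σ 1) / (1 / 2)) ^ (σ - min σ 1) * (y ^ (min σ 1 - 1) * Real.exp (-(1 / 2) * y))

variable {a : ℂ} {σ s : ℝ}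

theorem integrableOn_gammaMajorant (hσ : 0 < σ) : IntegrableOn (gammaMajorant σ) (Set.Ioi 0) := by
  have hexp : -1 < min σ 1 - 1 := by linarith [lt_min hσ one_pos]
  have hint := integrableOn_rpow_mul_exp_neg_mul_rpow hexp one_pos one_half_pos
  simp only [Real.rpow_one] at hint
  exact hint.const_mul _

theorem antitoneOn_gammaMajorant (σ : ℝ) : AntitoneOn (gammaMajorant σ) (Set.Ioi 0) := by
  intro x (hx : 0 < x) y (_ : 0 < y) hxy
  have hpow : y ^ (min σ 1 - 1) ≤ x ^ (min σ 1 - 1) :=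
    Real.rpow_le_rpow_of_nonpos hx hxy (sub_nonpos.2 (min_le_right σ 1))
  have hexp : Real.exp (-(1 / 2) * y) ≤ Real.exp (-(1 / 2) * x) :=
    Real.exp_le_exp.2 (by linarith)
  have hconst : 0 ≤ (σ - min σ 1) / (1 / 2) :=
    div_nonneg (sub_nonneg.2 (min_le_left σ 1)) one_half_pos.le
  unfold gammaMajorant
  gcongr

theorem exp_neg_mul_rpow_le_gammaMajorant (σ : ℝ) {y : ℝ} (hy : 0 < y) :
    Real.exp (-y) * y ^ (σ - 1) ≤ gammaMajorant σ y := by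
  set p := σ - min σ 1 with hp
  have hpow : y ^ p ≤ (p / (1 / 2)) ^ p * Real.exp (1 / 2 * y) := by
    simpa only [abs_of_pos hy, abs_of_pos (one_half_pos (α := ℝ))] using
      ProbabilityTheory.rpow_abs_le_mul_exp_abs y (sub_nonneg.2 (min_le_left σ 1))
        (one_half_pos (α := ℝ)).ne'
  calc Real.exp (-y) * y ^ (σ - 1) = Real.exp (-y) * (y ^ p * y ^ (min σ 1 - 1)) := by
        rw [← Real.rpow_add hy, hp, sub_add_sub_cancel]
    _ ≤ Real.exp (-y) * ((p / (1 / 2)) ^ p * Real.exp (1 / 2 * y) * y ^ (min σ 1 - 1)) := by gcongr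
    _ = (p / (1 / 2)) ^ p * (y ^ (min σ 1 - 1) * (Real.exp (-y) * Real.exp (1 / 2 * y))) := by ring
    _ = gammaMajorant σ y := by
        rw [← Real.exp_add, gammaMajorant, show -y + 1 / 2 * y = -(1 / 2) * y by ring]

theorem norm_gammaIntegrand_le (a : ℂ) {y : ℝ} (hy : 0 < y) :
    ‖gammaIntegrand a y‖ ≤ gammaMajorant a.re y := by
  rw [gammaIntegrand, norm_mul, Complex.norm_real, Real.norm_of_nonneg (Real.exp_pos _).le,
    Complex.norm_cpow_eq_rpow_re_of_pos hy, Complex.sub_re, Complex.one_re]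
  exact exp_neg_mul_rpow_le_gammaMajorant a.re hy

theorem continuousOn_gammaIntegrand (a : ℂ) : ContinuousOn (gammaIntegrand a) (Set.Ioi 0) := by
  intro y hy
  refine ContinuousAt.continuousWithinAt (ContinuousAt.mul (by fun_prop) ?_)
  exact Complex.continuousAt_ofReal_cpow_const y (a - 1) (Or.inr hy.ne')

theorem integral_gammaIntegrand (ha : 0 < a.re) :
    ∫ y in Set.Ioi 0, gammaIntegrand a y = Complex.Gamma a :=
  (Complex.Gamma_eq_integral ha).symm

theorem smul_gammaIntegrand_mul (a : ℂ) (hs : 0 < s) {y : ℝ} (hy : 0 ≤ y) :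
    s • gammaIntegrand a (s * y) =
      (s : ℂ) ^ a * ((y : ℂ) ^ (a - 1) * Complex.exp (-((y * s : ℝ) : ℂ))) := by
  have hs' : (s : ℂ) ≠ 0 := Complex.ofReal_ne_zero.2 hs.ne'
  have hsa : (s : ℂ) ^ a = s * (s : ℂ) ^ (a - 1) := by
    rw [Complex.cpow_sub _ _ hs', Complex.cpow_one, mul_div_cancel₀ _ hs']
  rw [gammaIntegrand, Complex.real_smul, Complex.ofReal_mul s y,
    Complex.mul_cpow_ofReal_nonneg hs.le hy, hsa, Complex.ofReal_exp, Complex.ofReal_neg,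
    mul_comm s y]
  ring

end GammaIntegrand

section GammaRiemannSum

/-- The right-endpoint Riemann sum of mesh `s` of Euler's integral for `Γ(a)`; it equals
`s ^ a * ∑ n ^ (a - 1) * e ^ (-n * s)`. -/
noncomputable def gammaRiemannSum (a : ℂ) (s : ℝ) : ℂ :=
  ∑' n : ℕ+, s • gammaIntegrand a (s * n)

variable {D : Type*} {a : ℂ} {s : ℝ} {w : D → ℂ} {P : D → ℝ}

theorem summable_norm_gammaRiemannSum (ha : 0 < a.re) (hs : 0 < s) :
    Summable fun n : ℕ+ => ‖s • gammaIntegrand a (s * n)‖ :=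
  summable_norm_smul_of_antitoneOn_bound (integrableOn_gammaMajorant ha)
    (antitoneOn_gammaMajorant _) (fun _ => norm_gammaIntegrand_le a) hs

theorem tsum_norm_gammaRiemannSum_le (ha : 0 < a.re) (hs : 0 < s) :
    ∑' n : ℕ+, ‖s • gammaIntegrand a (s * n)‖ ≤ ∫ y in Set.Ioi 0, gammaMajorant a.re y :=
  tsum_norm_smul_le_integral (integrableOn_gammaMajorant ha)
    (antitoneOn_gammaMajorant _) (fun _ => norm_gammaIntegrand_le a) hs

theorem norm_gammaRiemannSum_le (ha : 0 < a.re) (hs : 0 < s) :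
    ‖gammaRiemannSum a s‖ ≤ ∫ y in Set.Ioi 0, gammaMajorant a.re y :=
  (norm_tsum_le_tsum_norm (summable_norm_gammaRiemannSum ha hs)).trans
    (tsum_norm_gammaRiemannSum_le ha hs)

theorem tendsto_gammaRiemannSum (ha : 0 < a.re) :
    Tendsto (gammaRiemannSum a) (𝓝[>] 0) (𝓝 (Complex.Gamma a)) := by
  rw [← integral_gammaIntegrand ha]
  exact tendsto_tsum_smul_integral_Ioi (integrableOn_gammaMajorant ha)
    (antitoneOn_gammaMajorant _) (fun _ => norm_gammaIntegrand_le a) (continuousOn_gammaIntegrand a)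

theorem summable_mul_smul_gammaIntegrand (ha : 0 < a.re) (hw : Summable fun d => ‖w d‖)
    (hP : ∀ d, 0 < P d) :
    Summable fun p : D × ℕ+ => w p.1 * (P p.1 • gammaIntegrand a (P p.1 * p.2)) := by
  refine Summable.of_norm ((summable_prod_of_nonneg fun _ => norm_nonneg _).2 ⟨fun d => ?_, ?_⟩)
  · simpa only [norm_mul] using (summable_norm_gammaRiemannSum ha (hP d)).mul_left ‖w d‖
  · refine (hw.mul_right (∫ y in Set.Ioi 0, gammaMajorant a.re y)).of_nonneg_of_le
      (fun d => tsum_nonneg fun n => norm_nonneg _) fun d => ?_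
    simp only [norm_mul, tsum_mul_left]
    exact mul_le_mul_of_nonneg_left (tsum_norm_gammaRiemannSum_le ha (hP d)) (norm_nonneg _)

theorem tsum_prod_mul_smul_gammaIntegrand (ha : 0 < a.re) (hw : Summable fun d => ‖w d‖)
    (hP : ∀ d, 0 < P d) :
    ∑' p : D × ℕ+, w p.1 * (P p.1 • gammaIntegrand a (P p.1 * p.2)) =
      ∑' d, w d * gammaRiemannSum a (P d) := by
  rw [(summable_mul_smul_gammaIntegrand ha hw hP).tsum_prod]
  simp only [tsum_mul_left, gammaRiemannSum]

theorem tendsto_tsum_mul_gammaRiemannSum (ha : 0 < a.re) (hw : Summable fun d => ‖w d‖)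
    (hP : ∀ d, 0 < P d) :
    Tendsto (fun t : ℝ => ∑' d, w d * gammaRiemannSum a (t * P d)) (𝓝[>] 0)
      (𝓝 ((∑' d, w d) * Complex.Gamma a)) := by
  have hmesh (d : D) : Tendsto (fun t : ℝ => t * P d) (𝓝[>] 0) (𝓝[>] 0) := by
    refine tendsto_nhdsWithin_iff.2 ⟨?_, ?_⟩
    · exact ((continuous_mul_const (P d)).tendsto' 0 0 (zero_mul _)).mono_left nhdsWithin_le_nhds
    · filter_upwards [self_mem_nhdsWithin] with t ht using mul_pos ht (hP d)
  rw [← tsum_mul_right]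
  refine tendsto_tsum_of_dominated_convergence
    (hw.mul_right (∫ y in Set.Ioi 0, gammaMajorant a.re y))
    (fun d => ((tendsto_gammaRiemannSum ha).comp (hmesh d)).const_mul _) ?_
  filter_upwards [self_mem_nhdsWithin] with t ht d
  rw [norm_mul]
  exact mul_le_mul_of_nonneg_left (norm_gammaRiemannSum_le ha (mul_pos ht (hP d))) (norm_nonneg _)

end GammaRiemannSum

section ProductOfSeries

variable {ι R : Type*} [Fintype ι] {κ : ι → Type*} [NormedCommRing R] [NormOneClass R]
  {f : ∀ i, κ i → R}

theorem summable_norm_prod_pi (hf : ∀ i, Summable fun n => ‖f i n‖) :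
    Summable fun δ : ∀ i, κ i => ‖∏ i, f i (δ i)‖ := by
  classical
  refine summable_of_sum_le (fun _ => norm_nonneg _) (c := ∏ i, ∑' n, ‖f i n‖) fun s => ?_
  have hsub : s ⊆ Fintype.piFinset fun i => s.image (· i) := fun δ hδ =>
    Fintype.mem_piFinset.2 fun i => Finset.mem_image_of_mem _ hδ
  calc ∑ δ ∈ s, ‖∏ i, f i (δ i)‖ ≤ ∑ δ ∈ s, ∏ i, ‖f i (δ i)‖ :=
        Finset.sum_le_sum fun δ _ => Finset.norm_prod_le _ _
    _ ≤ ∑ δ ∈ Fintype.piFinset fun i => s.image (· i), ∏ i, ‖f i (δ i)‖ :=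
        Finset.sum_le_sum_of_subset_of_nonneg hsub fun _ _ _ => by positivity
    _ = ∏ i, ∑ n ∈ s.image (· i), ‖f i n‖ := (Finset.prod_univ_sum _ fun i n => ‖f i n‖).symm
    _ ≤ ∏ i, ∑' n, ‖f i n‖ := Finset.prod_le_prod (fun _ _ => by positivity) fun i _ =>
        (hf i).sum_le_tsum _ fun _ _ => norm_nonneg _

theorem tsum_prod_pi_of_summable_norm [CompleteSpace R] (hf : ∀ i, Summable fun n => ‖f i n‖) :
    ∑' δ : ∀ i, κ i, ∏ i, f i (δ i) = ∏ i, ∑' n, f i n := by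
  classical
  have heval (i : ι) : Tendsto (fun s : ∀ i, Finset (κ i) => s i) atTop atTop :=
    tendsto_atTop_finset_of_monotone (fun _ _ h => h i) fun n =>
      ⟨Function.update (fun _ => ∅) i {n}, by simp⟩
  have hbox : Tendsto (fun s : ∀ i, Finset (κ i) => Fintype.piFinset s) atTop atTop :=
    tendsto_atTop_finset_of_monotone (fun _ _ h => Fintype.piFinset_subset _ _ h) fun δ =>
      ⟨fun i => {δ i}, by simp⟩
  have hprod : Tendsto (fun s : ∀ i, Finset (κ i) => ∏ i, ∑ n ∈ s i, f i n) atTop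
      (𝓝 (∏ i, ∑' n, f i n)) :=
    tendsto_finsetProd _ fun i _ => (hf i).of_norm.hasSum.comp (heval i)
  simp only [Finset.prod_univ_sum] at hprod
  exact tendsto_nhds_unique ((summable_norm_prod_pi hf).of_norm.hasSum.comp hbox) hprod

end ProductOfSeries

section ZetaProduct

variable {ι : Type*} [Fintype ι] {s : ℂ} {β : ι → ℂ}

theorem summable_norm_pnat_cpow_neg (hs : 1 < s.re) :
    Summable fun n : ℕ+ => ‖((n : ℕ) : ℂ) ^ (-s)‖ := by
  have hsum := (Complex.summable_one_div_nat_cpow.2 hs).norm.comp_injective PNat.coe_injective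
  simpa only [Function.comp_def, Complex.cpow_neg, one_div] using hsum

theorem tsum_pnat_cpow_neg (hs : 1 < s.re) :
    ∑' n : ℕ+, ((n : ℕ) : ℂ) ^ (-s) = riemannZeta s := by
  rw [tsum_pnat_eq_tsum_succ (f := fun n : ℕ => (n : ℂ) ^ (-s)),
    zeta_eq_tsum_one_div_nat_add_one_cpow hs]
  simp only [Nat.cast_add_one, Complex.cpow_neg, one_div]

theorem summable_norm_prod_pnat_cpow_neg (hβ : ∀ i, 1 < (β i).re) :
    Summable fun d : ι → ℕ+ => ‖∏ i, ((d i : ℕ) : ℂ) ^ (-β i)‖ :=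
  summable_norm_prod_pi (f := fun i (n : ℕ+) => ((n : ℕ) : ℂ) ^ (-β i)) fun i =>
    summable_norm_pnat_cpow_neg (hβ i)

theorem tsum_prod_pnat_cpow_neg (hβ : ∀ i, 1 < (β i).re) :
    ∑' d : ι → ℕ+, ∏ i, ((d i : ℕ) : ℂ) ^ (-β i) = ∏ i, riemannZeta (β i) := by
  rw [tsum_prod_pi_of_summable_norm (f := fun i (n : ℕ+) => ((n : ℕ) : ℂ) ^ (-β i))
    fun i => summable_norm_pnat_cpow_neg (hβ i)]
  exact Finset.prod_congr rfl fun i _ => tsum_pnat_cpow_neg (hβ i)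

end ZetaProduct

section MultipleSeries

theorem ofReal_prod_cpow {ι : Type*} (s : Finset ι) {x : ι → ℝ} (hx : ∀ i ∈ s, 0 ≤ x i) (a : ℂ) :
    ((∏ i ∈ s, x i : ℝ) : ℂ) ^ a = ∏ i ∈ s, (x i : ℂ) ^ a := by
  induction s using Finset.cons_induction with
  | empty => simp
  | cons i s hi ih =>
    rw [Finset.forall_mem_cons] at hx
    rw [Finset.prod_cons, Finset.prod_cons, Complex.ofReal_mul,
      Complex.mul_cpow_ofReal_nonneg hx.1 (Finset.prod_nonneg hx.2), ih hx.2]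

theorem cpow_mul_prod_cpow_mul_exp {ι : Type*} [Fintype ι] [DecidableEq ι] (α : ι → ℂ) (k : ι)
    {t : ℝ} (ht : 0 < t) (δ : ι → ℕ+) :
    (t : ℂ) ^ α k * ((∏ i, ((δ i : ℕ) : ℂ) ^ (α i - 1)) *
        Complex.exp (-(((∏ i, ((δ i : ℕ) : ℝ)) * t : ℝ) : ℂ))) =
      (∏ i : {i // i ≠ k}, ((δ i : ℕ) : ℂ) ^ (-(α k + 1 - α i))) *
        ((t * ∏ i : {i // i ≠ k}, ((δ i : ℕ) : ℝ)) •
          gammaIntegrand (α k) (t * (∏ i : {i // i ≠ k}, ((δ i : ℕ) : ℝ)) * (δ k : ℕ))) := by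
  set P : ℝ := ∏ i : {i // i ≠ k}, ((δ i : ℕ) : ℝ) with hPdef
  have hP : 0 < P := Finset.prod_pos fun i _ => Nat.cast_pos.2 (δ i).pos
  have hfactor : ∏ i : {i // i ≠ k}, ((δ i : ℕ) : ℂ) ^ (α i - 1) =
      (∏ i : {i // i ≠ k}, ((δ i : ℕ) : ℂ) ^ (-(α k + 1 - α i))) * (P : ℂ) ^ α k := by
    rw [hPdef, ofReal_prod_cpow _ fun _ _ => Nat.cast_nonneg _, ← Finset.prod_mul_distrib]
    refine Finset.prod_congr rfl fun i _ => ?_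
    rw [Complex.ofReal_natCast, ← Complex.cpow_add _ _ (Nat.cast_ne_zero.2 (δ i).ne_zero)]
    congr 1
    ring
  rw [smul_gammaIntegrand_mul _ (mul_pos ht hP) (Nat.cast_nonneg _), Complex.ofReal_mul t P,
    Complex.mul_cpow_ofReal_nonneg ht.le hP.le, Fintype.prod_eq_mul_prod_subtype_ne _ k, hfactor,
    Fintype.prod_eq_mul_prod_subtype_ne (fun i => ((δ i : ℕ) : ℝ)) k, ← hPdef,
    Complex.ofReal_natCast, mul_right_comm, mul_assoc _ P t, mul_comm P t]
  ring

variable {ℓ : ℕ} {α : Fin ℓ → ℂ} {k : Fin ℓ}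

theorem one_lt_re_add_one_sub {a b : ℂ} (h : b.re < a.re) : 1 < (a + 1 - b).re := by
  rw [Complex.sub_re, Complex.add_re, Complex.one_re]
  linarith

theorem cpow_mul_Zc (hk : 0 < (α k).re) (hlt : ∀ i, i ≠ k → (α i).re < (α k).re)
    {t : ℝ} (ht : 0 < t) :
    (t : ℂ) ^ α k * Zc ℓ α t =
      ∑' d : {i // i ≠ k} → ℕ+, (∏ i, ((d i : ℕ) : ℂ) ^ (-(α k + 1 - α i))) *
        gammaRiemannSum (α k) (t * ∏ i, ((d i : ℕ) : ℝ)) := by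
  have hw := summable_norm_prod_pnat_cpow_neg fun i : {i // i ≠ k} =>
    one_lt_re_add_one_sub (hlt i i.2)
  have hmesh (d : {i // i ≠ k} → ℕ+) : 0 < t * ∏ i, ((d i : ℕ) : ℝ) :=
    mul_pos ht (Finset.prod_pos fun i _ => Nat.cast_pos.2 (d i).pos)
  rw [← tsum_prod_mul_smul_gammaIntegrand hk hw hmesh, Zc, ← tsum_mul_left,
    ← ((Equiv.funSplitAt k ℕ+).trans (Equiv.prodComm _ _)).tsum_eq]
  exact tsum_congr fun δ => cpow_mul_prod_cpow_mul_exp α k ht δ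

theorem tendsto_cpow_mul_Zc (hk : 0 < (α k).re) (hlt : ∀ i, i ≠ k → (α i).re < (α k).re) :
    Tendsto (fun t : ℝ => (t : ℂ) ^ α k * Zc ℓ α t) (𝓝[>] 0)
      (𝓝 (Complex.Gamma (α k) * ∏ i ∈ Finset.univ.erase k, riemannZeta (α k + 1 - α i))) := by
  have hβ (i : {i // i ≠ k}) : 1 < (α k + 1 - α i).re := one_lt_re_add_one_sub (hlt i i.2)
  have hlim := tendsto_tsum_mul_gammaRiemannSum (P := fun d => ∏ i, ((d i : ℕ) : ℝ)) hk
    (summable_norm_prod_pnat_cpow_neg hβ)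
    fun d => Finset.prod_pos fun i _ => Nat.cast_pos.2 (d i).pos
  rw [tsum_prod_pnat_cpow_neg hβ, mul_comm,
    ← Finset.prod_subtype (Finset.univ.erase k) (by simp)
      fun i => riemannZeta (α k + 1 - α i)] at hlim
  refine hlim.congr' ?_
  filter_upwards [self_mem_nhdsWithin] with t ht using (cpow_mul_Zc hk hlt ht).symm

end MultipleSeries

theorem Zc_asymptotic_general (ℓ : ℕ) (α : Fin ℓ → ℂ) (k : Fin ℓ) (hk : 0 < (α k).re)
    (hlt : ∀ i, i ≠ k → (α i).re < (α k).re) :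
    Tendsto (fun t : ℝ =>
        Zc ℓ α t /
          (Complex.Gamma (α k) *
            (∏ i ∈ Finset.univ.erase k, riemannZeta (α k + 1 - α i)) *
            (t : ℂ) ^ (-α k)))
      (𝓝[>] 0) (𝓝 1) := by
  have hzeta : ∏ i ∈ Finset.univ.erase k, riemannZeta (α k + 1 - α i) ≠ 0 :=
    Finset.prod_ne_zero_iff.2 fun i hi => riemannZeta_ne_zero_of_one_lt_re
      (one_lt_re_add_one_sub (hlt i (Finset.ne_of_mem_erase hi)))
  have hlim := (tendsto_cpow_mul_Zc hk hlt).div_const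
    (Complex.Gamma (α k) * ∏ i ∈ Finset.univ.erase k, riemannZeta (α k + 1 - α i))
  rw [div_self (mul_ne_zero (Complex.Gamma_ne_zero_of_re_pos hk) hzeta)] at hlim
  refine hlim.congr fun t => ?_
  rw [Complex.cpow_neg, ← div_eq_mul_inv, div_div_eq_mul_div, mul_comm (Zc ℓ α t)]

/-- if `Re α_1 > Re α_2 ≥ ⋯ ≥ Re α_ℓ` and `Re α_1 > 0`, then as `t → 0⁺`,
`Z^{[ℓ]}_{α}(t) ~ Γ(α_1) ζ(α_1+1-α_2)⋯ζ(α_1+1-α_ℓ) t^{-α_1}`. -/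
theorem Zc_asymptotic (ℓ : ℕ) (hℓ : 1 ≤ ℓ) (α : Fin ℓ → ℂ)
    (h0 : 0 < (α ⟨0, hℓ⟩).re)
    (hstrict : ∀ i : Fin ℓ, i ≠ ⟨0, hℓ⟩ → (α i).re < (α ⟨0, hℓ⟩).re)
    (hmono : ∀ i j : Fin ℓ, i ≠ ⟨0, hℓ⟩ → i ≤ j → (α j).re ≤ (α i).re) :
    Tendsto (fun t : ℝ =>
        Zc ℓ α t /
          (Complex.Gamma (α ⟨0, hℓ⟩) *
            (∏ i ∈ Finset.univ.erase (⟨0, hℓ⟩ : Fin ℓ),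
              riemannZeta (α ⟨0, hℓ⟩ + 1 - α i)) *
            (t : ℂ) ^ (-α ⟨0, hℓ⟩)))
      (nhdsWithin 0 (Set.Ioi 0)) (nhds 1) :=
  Zc_asymptotic_general ℓ α ⟨0, hℓ⟩ h0 hstrict
end
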